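/- For every d ≥ 1 there is a constant C = C(d) such that for every n ≥ 2 and every finite set A ⊆ ℤ^d with |A| = n, ē(A) ≤ e_o(B_n) + C n^{2/d − γ_d} (log n)², where γ_1 = 1, γ_2 = 1/3, and γ_d = 2^{−d}/(2d² log 3) for d ≥ 3. -/

import Mathlib

open scoped BigOperators Pointwise symmDiff
open MeasureTheory Filter

noncomputable section
open scoped Classical
namespace RotorRouterPaper

/-- Sites of the lattice `ℤ^d`. -/
abbrev Site (d : ℕ) := Fin d → ℤ

/-- The `i`-th standard basis vector of `ℤ^d`. -/
def unitVec (d : ℕ) (i : Fin d) : Site d := fun j => if j = i then 1 else 0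

/-- Squared Euclidean norm of a lattice point. -/
def nsq {d : ℕ} (x : Site d) : ℝ := ∑ i, ((x i : ℝ)) ^ 2

/-- Euclidean norm of a lattice point. -/
def enorm {d : ℕ} (x : Site d) : ℝ := Real.sqrt (nsq x)

/-- Adjacency `x ∼ y`: Euclidean distance one. -/
def Adj {d : ℕ} (x y : Site d) : Prop := nsq (x - y) = 1

/-- `ω_d`, the Lebesgue volume of the unit ball in `ℝ^d`. -/
def ballVol (d : ℕ) : ℝ := (volume (Metric.ball (0 : EuclideanSpace ℝ (Fin d)) 1)).toReal

/-- The lattice ball `B_n = {y ∈ ℤ^d : ω_d ‖y‖^d < n}`. -/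
def lball (d n : ℕ) : Set (Site d) := {y | ballVol d * enorm y ^ d < (n : ℝ)}

/-- Characterization of the expected exit time function of a (finite) region `A ⊆ ℤ^d`:
it vanishes off `A` and its discrete Laplacian is `-1` on `A`. -/
def IsExitFun (d : ℕ) (A : Set (Site d)) (e : Site d → ℝ) : Prop :=
  (∀ x, x ∉ A → e x = 0) ∧
  ∀ x ∈ A, (1 / (2 * (d : ℝ))) * (∑ i, (e (x + unitVec d i) + e (x - unitVec d i))) - e x = -1

/-- The expected exit time function `x ↦ e_x(A)` (the unique function satisfying
`IsExitFun` when `A` is finite). -/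
def exitFun (d : ℕ) (A : Set (Site d)) : Site d → ℝ :=
  if h : ∃ e, IsExitFun d A e then h.choose else 0

/-- `ē(A) = sup_x e_x(A)`. -/
def ebar (d : ℕ) (A : Set (Site d)) : ℝ := sSup (Set.range (exitFun d A))

/-- `φ(n) = sup {ē(A) - e_o(B_n) : A ⊆ ℤ^d, |A| = n}`. -/
def phi (d n : ℕ) : ℝ :=
  sSup {t | ∃ A : Set (Site d), A.Finite ∧ A.ncard = n ∧ t = ebar d A - exitFun d (lball d n) 0}

/-- `Φ(n) = ∑_{j=1}^n φ(j)`. -/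
def PhiSum (d n : ℕ) : ℝ := ∑ j ∈ Finset.Icc 1 n, phi d j

/-- `ψ(A) = ∑_{x ∈ A} ‖x‖²`. -/
def psi {d : ℕ} (A : Set (Site d)) : ℝ := ∑ᶠ x ∈ A, nsq x

/-- A cardinal direction in `ℤ^d`: one of `±e_1, …, ±e_d`. -/
abbrev Dir (d : ℕ) := Fin d × Bool

/-- The lattice step vector of a cardinal direction. -/
def dirVec (d : ℕ) (ε : Dir d) : Site d := if ε.2 then unitVec d ε.1 else -unitVec d ε.1

/-- A configuration of rotor stacks `r` (with `r x i` the direction used for the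
`(i+1)`-st visit to `x`) has discrepancy at most `D` if for every site, direction and `m ≥ 1`,
among the first `m` rotors of the stack each direction occurs `m/(2d)` times up to error `D`. -/
def HasDiscrepancy (d : ℕ) (D : ℝ) (r : Site d → ℕ → Dir d) : Prop :=
  ∀ (x : Site d) (ε : Dir d) (m : ℕ), 1 ≤ m →
    |(({i | i < m ∧ r x i = ε} : Set ℕ).ncard : ℝ) - (m : ℝ) / (2 * (d : ℝ))| ≤ D

/-- One step of rotor-router walk on a state (current position, visit counts so far):
the particle at `p` being visited for the `(c p + 1)`-st time moves in direction
`r p (c p)` and the visit count at `p` increases by one. -/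
def rstep {d : ℕ} (r : Site d → ℕ → Dir d) (s : Site d × (Site d → ℕ)) :
    Site d × (Site d → ℕ) :=
  (s.1 + dirVec d (r s.1 (s.2 s.1)), Function.update s.2 s.1 (s.2 s.1 + 1))

/-- The state after `t` steps of rotor-router walk started at the origin with visit counts `c`. -/
def walkState {d : ℕ} (r : Site d → ℕ → Dir d) (c : Site d → ℕ) (t : ℕ) :
    Site d × (Site d → ℕ) :=
  (rstep r)^[t] (0, c)

/-- The number of steps until the rotor-router walk started at the origin
(with carried-over visit counts `c`) first leaves the region `A`. -/
def exitSteps {d : ℕ} (r : Site d → ℕ → Dir d) (A : Set (Site d)) (c : Site d → ℕ) : ℕ :=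
  sInf {t | (walkState r c t).1 ∉ A}

/-- The state of rotor-router aggregation after `n` particles have walked and settled:
`(aggState r n).1` is the occupied region `A_{n+1}`, `(aggState r n).2.1` the accumulated
visit counts, and `(aggState r n).2.2` the total number `T_n` of steps taken so far. -/
def aggState {d : ℕ} (r : Site d → ℕ → Dir d) : ℕ → Set (Site d) × (Site d → ℕ) × ℕ
  | 0 => ({0}, fun _ => 0, 0)
  | n + 1 =>
      let s := aggState r n
      let τ := exitSteps r s.1 s.2.1
      (insert (walkState r s.2.1 τ).1 s.1, (walkState r s.2.1 τ).2, s.2.2 + τ)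

/-- The region `A_n` of rotor-router aggregation (for `n ≥ 1`). -/
def aggRegion {d : ℕ} (r : Site d → ℕ → Dir d) (n : ℕ) : Set (Site d) :=
  (aggState r (n - 1)).1

/-- `T_n`, the total number of steps taken by the first `n` particles. -/
def totalSteps {d : ℕ} (r : Site d → ℕ → Dir d) (n : ℕ) : ℕ := (aggState r n).2.2

/-- `A^□ = A + [-1/2,1/2]^d ⊆ ℝ^d`. -/
def box (d : ℕ) (A : Set (Site d)) : Set (EuclideanSpace ℝ (Fin d)) :=
  {z | ∃ x ∈ A, ∀ i, |z i - (x i : ℝ)| ≤ 1 / 2}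

/-- The closed Euclidean ball of unit volume centered at the origin of `ℝ^d`. -/
def unitVolBall (d : ℕ) : Set (EuclideanSpace ℝ (Fin d)) :=
  Metric.closedBall 0 (ballVol d ^ (-(1 : ℝ) / (d : ℝ)))

/-- `A ⊆ ℤ^d` is orthoconvex if every line parallel to a coordinate axis meets `A`
in an interval. -/
def Orthoconvex (d : ℕ) (A : Set (Site d)) : Prop :=
  ∀ x ∈ A, ∀ i : Fin d, ∀ k : ℤ, 0 < k → x + k • unitVec d i ∈ A →
    ∀ j : ℤ, 0 < j → j < k → x + j • unitVec d i ∈ A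

/-- The nonnegative orthant `Q ⊆ ℤ^d`. -/
def orthant (d : ℕ) : Set (Site d) := {x | ∀ i, 0 ≤ x i}

/-- The cube `C(o,r) = {x : ‖x‖_∞ ≤ r}`. -/
def cubeSet (d : ℕ) (r : ℕ) : Set (Site d) := {x | ∀ i, |x i| ≤ (r : ℤ)}

/-- The boundary `∂C(o,r) = {x : ‖x‖_∞ = r + 1 and x ∼ y for some y ∈ C(o,r)}`. -/
def cubeBdry (d : ℕ) (r : ℕ) : Set (Site d) :=
  {x | (∀ i, |x i| ≤ (r : ℤ) + 1) ∧ (∃ i, |x i| = (r : ℤ) + 1) ∧ ∃ y ∈ cubeSet d r, Adj x y}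

/-- Characterization of `h_r(x) = P_x(T_Q > T_{∂C(o,r)})`: it vanishes on
`Q ∩ (C(o,r) ∪ ∂C(o,r))`, equals `1` on `∂C(o,r) ∖ Q`, is discrete harmonic on
`C(o,r) ∖ Q`, and (as a normalization) vanishes off `C(o,r) ∪ ∂C(o,r)`. -/
def IsOrthHarm (d : ℕ) (r : ℕ) (h : Site d → ℝ) : Prop :=
  (∀ x, x ∉ cubeSet d r ∪ cubeBdry d r → h x = 0) ∧
  (∀ x ∈ orthant d ∩ (cubeSet d r ∪ cubeBdry d r), h x = 0) ∧
  (∀ x ∈ cubeBdry d r \ orthant d, h x = 1) ∧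
  (∀ x ∈ cubeSet d r \ orthant d,
    h x = (1 / (2 * (d : ℝ))) * ∑ i, (h (x + unitVec d i) + h (x - unitVec d i)))

/-- The function `h_r` of the previous characterization. -/
def orthHarm (d : ℕ) (r : ℕ) : Site d → ℝ :=
  if h : ∃ f, IsOrthHarm d r f then h.choose else 0

/-- `p(k,r) = sup {h_r(x) : ‖x‖_∞ ≤ k}`. -/
def pkr (d k r : ℕ) : ℝ :=
  sSup {t | ∃ x : Site d, (∀ i, |x i| ≤ (k : ℤ)) ∧ t = orthHarm d r x}

/-- The exponent `γ_d` of Theorem 3.1. -/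
def gam (d : ℕ) : ℝ :=
  if d = 1 then 1 else if d = 2 then 1 / 3
  else (2 : ℝ) ^ (-(d : ℝ)) / (2 * (d : ℝ) ^ 2 * Real.log 3)

/-!
Let `r_n` be the radius of the Euclidean ball of volume `n`. Comparison of `e` with `r_n² - ‖x‖²`
gives `e_o(B_n) ≥ r_n²`, so it suffices to bound `ē(A)` by `r_n²` up to the error term.

The truncations `f = (e - t)₊` of an exit time satisfy `𝓔(f) ≤ ∑ f`, where `𝓔` is the Dirichlet
energy. Extend `f` to a function `F` on `ℝ^d` that is constant on unit cells, and consider the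
nonlocal energy `E(F) = ∬_{‖x - y‖ < ρ} (F x - F y)²`. The parallelogram inequality and the
symmetry of the ball under coordinate flips bound `E(F)` by a multiple of `𝓔(f)`. Polarization
preserves `∫ F` and does not increase `E(F)`, and iterated polarizations drive the support of `F`
into a centred ball of the same volume, up to arbitrarily small measure; testing against the
torsion function `(S² - ‖x‖²)₊` there bounds `E(F)` from below by a multiple of `(∫ F)²`. Together
this is a discrete torsion inequality `(∑ f)² ≤ τ_k 𝓔(f)` for nonnegative functions supported on
`k` sites, so that `∑ (e - t)₊ ≤ τ_k` whenever `e > t` on at most `k` sites.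

Abel summation over the level sets of `e` turns this into
`e ≤ τ_n / n + ∑_{j < n} τ_j / (j (j + 1))`. With the scale `ρ = k ^ (1 / (3 d))` one has
`τ_k = (2 / (d + 2)) k r_k² (1 + O(k ^ (-2 / (3 d))))`, and for `d ≥ 2` the sum is
`r_n² + O(n ^ (4 / (3 d)))`. In dimension one, `e_x ≤ (x - a) (b - x)` where `a < x < b` are the
sites outside `A` nearest to `x`.
-/

/-! ### Exit times on the lattice -/

section ExitTime

variable {d : ℕ}

/-- The normalised discrete Laplacian of `ℤ^d`, i.e. the generator of simple random walk. -/
def laplacian (d : ℕ) : (Site d → ℝ) →ₗ[ℝ] Site d → ℝ where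
  toFun f x := 1 / (2 * (d : ℝ)) * ∑ i, (f (x + unitVec d i) + f (x - unitVec d i)) - f x
  map_add' f g := by
    ext x
    simp only [Pi.add_apply, Finset.sum_add_distrib]
    ring
  map_smul' c f := by
    ext x
    simp only [Pi.smul_apply, smul_eq_mul, RingHom.id_apply, Finset.sum_add_distrib,
      ← Finset.mul_sum]
    ring

lemma laplacian_apply (f : Site d → ℝ) (x : Site d) :
    laplacian d f x = 1 / (2 * (d : ℝ)) * ∑ i, (f (x + unitVec d i) + f (x - unitVec d i)) - f x :=
  rfl

lemma IsExitFun.laplacian_eq {A : Set (Site d)} {e : Site d → ℝ} (he : IsExitFun d A e)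
    {x : Site d} (hx : x ∈ A) : laplacian d e x = -1 :=
  he.2 x hx

lemma nsq_nonneg (x : Site d) : 0 ≤ nsq x := Finset.sum_nonneg fun _ _ => sq_nonneg _

lemma enorm_sq (x : Site d) : enorm x ^ 2 = nsq x := Real.sq_sqrt (nsq_nonneg x)

lemma nsq_neg (x : Site d) : nsq (-x) = nsq x := by simp [nsq]

lemma nsq_unitVec (i : Fin d) : nsq (unitVec d i) = 1 := by simp [nsq, unitVec]

lemma adj_add_unitVec (x : Site d) (i : Fin d) : Adj (x + unitVec d i) x := by
  simp [Adj, nsq_unitVec]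

lemma adj_sub_unitVec (x : Site d) (i : Fin d) : Adj (x - unitVec d i) x := by
  simp [Adj, nsq_neg, nsq_unitVec]

lemma nsq_add_unitVec_add_nsq_sub_unitVec (x : Site d) (i : Fin d) :
    nsq (x + unitVec d i) + nsq (x - unitVec d i) = 2 * nsq x + 2 := by
  have hterm (j : Fin d) : (((x + unitVec d i) j : ℤ) : ℝ) ^ 2 + (((x - unitVec d i) j : ℤ) : ℝ) ^ 2
      = 2 * (x j : ℝ) ^ 2 + if j = i then 2 else 0 := by
    simp only [Pi.add_apply, Pi.sub_apply, unitVec]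
    split_ifs <;> push_cast <;> ring
  simp only [nsq, ← Finset.sum_add_distrib, hterm]
  simp [Finset.sum_add_distrib, Finset.mul_sum]

lemma laplacian_sub_nsq (hd : 1 ≤ d) (c : ℝ) (x : Site d) :
    laplacian d (fun y => c - nsq y) x = -1 := by
  have hd₀ : (d : ℝ) ≠ 0 := by positivity
  have hterm (i : Fin d) : (c - nsq (x + unitVec d i)) + (c - nsq (x - unitVec d i))
      = 2 * (c - nsq x) - 2 := by
    linarith [nsq_add_unitVec_add_nsq_sub_unitVec x i]
  simp only [laplacian_apply, hterm, Finset.sum_const, Finset.card_univ, Fintype.card_fin,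
    nsmul_eq_mul]
  field_simp
  ring

lemma eq_of_laplacian_nonpos_of_le_neighbors {f : Site d → ℝ} {w : Site d}
    (hlap : laplacian d f w ≤ 0) (hadd : ∀ i, f w ≤ f (w + unitVec d i))
    (hsub : ∀ i, f w ≤ f (w - unitVec d i)) (i : Fin d) : f (w + unitVec d i) = f w := by
  have hd : (0 : ℝ) < d := Nat.cast_pos.2 i.pos
  have hle (j : Fin d) (_ : j ∈ Finset.univ) :
      2 * f w ≤ f (w + unitVec d j) + f (w - unitVec d j) := by linarith [hadd j, hsub j]
  have hsum : ∑ j, (f (w + unitVec d j) + f (w - unitVec d j)) ≤ ∑ _j : Fin d, 2 * f w := by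
    rw [laplacian_apply, sub_nonpos, one_div, inv_mul_le_iff₀ (by positivity)] at hlap
    simpa [mul_comm, mul_left_comm, mul_assoc] using hlap
  have heq := (Finset.sum_eq_sum_iff_of_le hle).1 ((Finset.sum_le_sum hle).antisymm hsum) i
    (Finset.mem_univ i)
  linarith [hadd i, hsub i]

/-- The outer vertex boundary `∂A` of a set of lattice sites. -/
def vertexBoundary (A : Set (Site d)) : Set (Site d) := {x | x ∉ A ∧ ∃ y ∈ A, Adj x y}

theorem nonneg_of_laplacian_nonpos (hd : 1 ≤ d) {A : Set (Site d)} (hA : A.Finite)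
    {f : Site d → ℝ} (hlap : ∀ x ∈ A, laplacian d f x ≤ 0) (hbd : ∀ x ∈ vertexBoundary A, 0 ≤ f x)
    {x : Site d} (hx : x ∈ A) : 0 ≤ f x := by
  obtain ⟨z, hzA, hz⟩ := hA.exists_minimalFor f A ⟨x, hx⟩
  have hzmin : ∀ y ∈ A, f z ≤ f y := fun y hy => (le_total (f z) (f y)).elim id (hz hy)
  by_contra! hneg
  have hz_neg : f z < 0 := (hzmin x hx).trans_lt hneg
  let i₀ : Fin d := ⟨0, hd⟩
  -- Among the minimisers, the one farthest in direction `i₀` has a larger right neighbour.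
  obtain ⟨w, ⟨hwA, hwz⟩, hw⟩ := (hA.subset (Set.sep_subset A (f · = f z))).exists_maximalFor
    (fun y => y i₀) _ ⟨z, hzA, rfl⟩
  have hnbr {y : Site d} (hy : Adj y w) : f w ≤ f y := by
    by_cases hyA : y ∈ A
    · exact hwz ▸ hzmin y hyA
    · exact hwz ▸ hz_neg.le.trans (hbd y ⟨hyA, w, hwA, hy⟩)
  have heq := eq_of_laplacian_nonpos_of_le_neighbors (hlap w hwA)
    (fun i => hnbr (adj_add_unitVec w i)) (fun i => hnbr (adj_sub_unitVec w i)) i₀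
  have hmem : w + unitVec d i₀ ∈ A := by
    by_contra h
    linarith [hbd _ ⟨h, w, hwA, adj_add_unitVec w i₀⟩]
  have hle : (w + unitVec d i₀) i₀ ≤ w i₀ :=
    hw (j := w + unitVec d i₀) ⟨hmem, heq.trans hwz⟩ (by simp [unitVec])
  simp [unitVec] at hle

lemma exists_isExitFun (hd : 1 ≤ d) {A : Set (Site d)} (hA : A.Finite) : ∃ e, IsExitFun d A e := by
  have : Fintype A := hA.fintype
  let ext := Function.ExtendByZero.linearMap ℝ ((↑) : A → Site d)
  let T : (A → ℝ) →ₗ[ℝ] A → ℝ := LinearMap.funLeft ℝ ℝ (↑) ∘ₗ laplacian d ∘ₗ ext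
  have hext_coe (f : A → ℝ) (a : A) : ext f a = f a := Subtype.val_injective.extend_apply f 0 a
  have hext_zero (f : A → ℝ) {x : Site d} (hx : x ∉ A) : ext f x = 0 :=
    Function.extend_apply' f (0 : Site d → ℝ) x (by rintro ⟨a, rfl⟩; exact hx a.2)
  have hnonneg {f : A → ℝ} (hf : T f = 0) (a : A) : 0 ≤ f a := by
    rw [← hext_coe f a]
    exact nonneg_of_laplacian_nonpos hd hA (fun x hx => (congrFun hf ⟨x, hx⟩).le)
      (fun x hx => (hext_zero f hx.1).ge) a.2
  have hinj : Function.Injective T := by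
    refine (injective_iff_map_eq_zero T).2 fun f hf => funext fun a => le_antisymm ?_ (hnonneg hf a)
    exact neg_nonneg.1 (hnonneg (f := -f) (by rw [map_neg, hf, neg_zero]) a)
  obtain ⟨f, hf⟩ := LinearMap.injective_iff_surjective.1 hinj fun _ => -1
  exact ⟨ext f, fun x hx => hext_zero f hx, fun x hx => congrFun hf ⟨x, hx⟩⟩

lemma isExitFun_exitFun (hd : 1 ≤ d) {A : Set (Site d)} (hA : A.Finite) :
    IsExitFun d A (exitFun d A) := by
  unfold exitFun
  rw [dif_pos (exists_isExitFun hd hA)]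
  exact (exists_isExitFun hd hA).choose_spec

theorem IsExitFun.le_of_laplacian_le (hd : 1 ≤ d) {A B : Set (Site d)} (hB : B.Finite)
    (hBA : B ⊆ A) {e g : Site d → ℝ} (he : IsExitFun d A e) (hlap : ∀ x ∈ B, laplacian d g x ≤ -1)
    (hbd : ∀ x ∈ vertexBoundary B, e x ≤ g x) {x : Site d} (hx : x ∈ B) : e x ≤ g x := by
  refine sub_nonneg.1 (nonneg_of_laplacian_nonpos hd hB (f := g - e) (fun y hy => ?_)
    (fun y hy => sub_nonneg.2 (hbd y hy)) hx)
  rw [map_sub, Pi.sub_apply, he.laplacian_eq (hBA hy)]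
  linarith [hlap y hy]

theorem IsExitFun.ge_of_laplacian_ge (hd : 1 ≤ d) {A : Set (Site d)} (hA : A.Finite)
    {e g : Site d → ℝ} (he : IsExitFun d A e) (hlap : ∀ x ∈ A, -1 ≤ laplacian d g x)
    (hbd : ∀ x ∉ A, g x ≤ 0) (x : Site d) : g x ≤ e x := by
  by_cases hx : x ∈ A
  · refine sub_nonneg.1 (nonneg_of_laplacian_nonpos hd hA (f := e - g) (fun y hy => ?_)
      (fun y hy => ?_) hx)
    · rw [map_sub, Pi.sub_apply, he.laplacian_eq hy]
      linarith [hlap y hy]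
    · rw [Pi.sub_apply, he.1 y hy.1, zero_sub]
      exact neg_nonneg.2 (hbd y hy.1)
  · rw [he.1 x hx]
    exact hbd x hx

lemma IsExitFun.nonneg (hd : 1 ≤ d) {A : Set (Site d)} (hA : A.Finite) {e : Site d → ℝ}
    (he : IsExitFun d A e) (x : Site d) : 0 ≤ e x :=
  he.ge_of_laplacian_ge hd hA (g := 0) (by simp) (by simp) x

end ExitTime

section LatticeBall

variable {d : ℕ}

lemma ballVol_pos (d : ℕ) : 0 < ballVol d :=
  ENNReal.toReal_pos (Metric.measure_ball_pos _ _ one_pos).ne' measure_ball_lt_top.ne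

/-- The radius of the Euclidean ball of volume `v` in `ℝ^d`. -/
def ballRadius (d : ℕ) (v : ℝ) : ℝ := (v / ballVol d) ^ (1 / (d : ℝ))

lemma ballRadius_nonneg (d : ℕ) {v : ℝ} (hv : 0 ≤ v) : 0 ≤ ballRadius d v :=
  Real.rpow_nonneg (div_nonneg hv (ballVol_pos d).le) _

lemma ballVol_mul_ballRadius_pow (hd : 1 ≤ d) {v : ℝ} (hv : 0 ≤ v) :
    ballVol d * ballRadius d v ^ d = v := by
  rw [ballRadius, one_div, Real.rpow_inv_natCast_pow (div_nonneg hv (ballVol_pos d).le) (by lia),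
    mul_div_cancel₀ _ (ballVol_pos d).ne']

lemma mem_lball_iff_nsq_lt (hd : 1 ≤ d) {n : ℕ} {y : Site d} :
    y ∈ lball d n ↔ nsq y < ballRadius d n ^ 2 := by
  have hr := ballRadius_nonneg d n.cast_nonneg
  have hy : 0 ≤ enorm y := Real.sqrt_nonneg _
  change ballVol d * enorm y ^ d < n ↔ _
  conv_lhs => rw [← ballVol_mul_ballRadius_pow hd n.cast_nonneg]
  rw [← enorm_sq, mul_lt_mul_iff_right₀ (ballVol_pos d), pow_lt_pow_iff_left₀ hy hr (by lia),
    pow_lt_pow_iff_left₀ hy hr two_ne_zero]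

lemma finite_lball (hd : 1 ≤ d) (n : ℕ) : (lball d n).Finite := by
  obtain ⟨M, hM⟩ := exists_nat_gt (ballRadius d n)
  have hr := ballRadius_nonneg d n.cast_nonneg
  refine (Set.finite_Icc (fun _ => -(M : ℤ)) (fun _ => (M : ℤ))).subset fun y hy => ?_
  have hcoord (i : Fin d) : |(y i : ℝ)| ≤ M := by
    have hle : (y i : ℝ) ^ 2 ≤ nsq y :=
      Finset.single_le_sum (f := fun i => (y i : ℝ) ^ 2) (fun _ _ => sq_nonneg _)
        (Finset.mem_univ i)
    exact (abs_le_of_sq_le_sq (hle.trans ((mem_lball_iff_nsq_lt hd).1 hy).le) hr).trans hM.le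
  exact ⟨fun i => mod_cast (abs_le.1 (hcoord i)).1, fun i => mod_cast (abs_le.1 (hcoord i)).2⟩

theorem sq_ballRadius_le_exitFun_lball (hd : 1 ≤ d) (n : ℕ) :
    ballRadius d n ^ 2 ≤ exitFun d (lball d n) 0 := by
  have hexit := isExitFun_exitFun hd (finite_lball hd n)
  have hle := hexit.ge_of_laplacian_ge hd (finite_lball hd n)
    (g := fun y => ballRadius d n ^ 2 - nsq y) (fun x _ => (laplacian_sub_nsq hd _ x).ge)
    (fun x hx => by
      rw [mem_lball_iff_nsq_lt hd] at hx
      linarith) 0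
  simpa [nsq] using hle

end LatticeBall

/-! ### Discrete Dirichlet energies -/

section ShiftEnergy

variable {G : Type*} [AddCommGroup G] {f : G → ℝ}

/-- The squared `ℓ²`-distance between `f` and its translate by `z`; summing it over the unit
vectors gives the discrete Dirichlet energy. -/
def shiftEnergy (f : G → ℝ) (z : G) : ℝ := ∑' x, (f (x + z) - f x) ^ 2

lemma hasFiniteSupport_comp_add_right (hf : f.HasFiniteSupport) (z : G) :
    (fun x => f (x + z)).HasFiniteSupport :=
  hf.preimage (add_left_injective z).injOn

lemma hasFiniteSupport_sub_comp_add_right (hf : f.HasFiniteSupport) (z : G) :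
    (fun x => f (x + z) - f x).HasFiniteSupport :=
  (hasFiniteSupport_comp_add_right hf z).fun_sub hf

lemma summable_sq_sub_comp_add (hf : f.HasFiniteSupport) (z : G) :
    Summable fun x => (f (x + z) - f x) ^ 2 := by
  simpa only [sq] using
    summable_of_hasFiniteSupport ((hasFiniteSupport_sub_comp_add_right hf z).fun_mul_left _)

lemma shiftEnergy_nonneg (f : G → ℝ) (z : G) : 0 ≤ shiftEnergy f z :=
  tsum_nonneg fun _ => sq_nonneg _

lemma tsum_comp_add_right (f : G → ℝ) (w : G) : ∑' x, f (x + w) = ∑' x, f x :=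
  (Equiv.addRight w).tsum_eq f

lemma summable_comp_add_right (hf : Summable f) (w : G) : Summable fun x => f (x + w) :=
  (Equiv.addRight w).summable_iff.2 hf

lemma shiftEnergy_neg (f : G → ℝ) (z : G) : shiftEnergy f (-z) = shiftEnergy f z := by
  rw [shiftEnergy, ← tsum_comp_add_right _ z]
  simp only [add_neg_cancel_right]
  exact tsum_congr fun x => by ring

lemma tsum_sub_mul_sub_eq_tsum_mul_second_difference (hf : f.HasFiniteSupport) (g : G → ℝ) (z : G) :
    ∑' x, (f (x + z) - f x) * (g (x + z) - g x)
      = ∑' x, f x * (2 * g x - (g (x + z) + g (x - z))) := by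
  have hfz := hasFiniteSupport_comp_add_right hf z
  have hsum {h : G → ℝ} (k : G → ℝ) (hh : h.HasFiniteSupport) : Summable fun x => h x * k x :=
    summable_of_hasFiniteSupport (hh.fun_mul_left k)
  calc ∑' x, (f (x + z) - f x) * (g (x + z) - g x)
      = ∑' x, f (x + z) * (g (x + z) - g x) - ∑' x, f x * (g (x + z) - g x) := by
        rw [← (hsum _ hfz).tsum_sub (hsum _ hf)]
        exact tsum_congr fun x => by ring
    _ = ∑' x, f x * (g x - g (x - z)) - ∑' x, f x * (g (x + z) - g x) := by
        rw [← tsum_comp_add_right (fun x => f x * (g x - g (x - z))) z]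
        simp only [add_sub_cancel_right]
    _ = _ := by
        rw [← (hsum _ hf).tsum_sub (hsum _ hf)]
        exact tsum_congr fun x => by ring

lemma shiftEnergy_nsmul_le (hf : f.HasFiniteSupport) (z : G) (k : ℕ) :
    shiftEnergy f (k • z) ≤ (k : ℝ) ^ 2 * shiftEnergy f z := by
  have hsum (j : ℕ) : Summable fun x => (f (x + j • z + z) - f (x + j • z)) ^ 2 :=
    summable_comp_add_right (summable_sq_sub_comp_add hf z) (j • z)
  have htelescope (x : G) : (f (x + k • z) - f x) ^ 2
      ≤ k * ∑ j ∈ Finset.range k, (f (x + j • z + z) - f (x + j • z)) ^ 2 := by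
    have hsub := Finset.sum_range_sub (fun j : ℕ => f (x + j • z)) k
    simp only [succ_nsmul, ← add_assoc, zero_nsmul, add_zero] at hsub
    rw [← hsub]
    simpa using sq_sum_le_card_mul_sum_sq (s := Finset.range k)
      (f := fun j : ℕ => f (x + j • z + z) - f (x + j • z))
  calc shiftEnergy f (k • z)
      ≤ ∑' x, k * ∑ j ∈ Finset.range k, (f (x + j • z + z) - f (x + j • z)) ^ 2 :=
        (summable_sq_sub_comp_add hf _).tsum_le_tsum htelescope
          ((summable_sum fun j _ => hsum j).mul_left _)
    _ = k * ∑ _j ∈ Finset.range k, shiftEnergy f z := by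
        rw [tsum_mul_left, Summable.tsum_finsetSum fun j _ => hsum j]
        exact congrArg _ (Finset.sum_congr rfl fun j _ =>
          tsum_comp_add_right (fun x => (f (x + z) - f x) ^ 2) (j • z))
    _ = (k : ℝ) ^ 2 * shiftEnergy f z := by
        rw [Finset.sum_const, Finset.card_range, nsmul_eq_mul]
        ring

lemma shiftEnergy_zsmul_le (hf : f.HasFiniteSupport) (z : G) (k : ℤ) :
    shiftEnergy f (k • z) ≤ (k : ℝ) ^ 2 * shiftEnergy f z := by
  obtain ⟨n, rfl | rfl⟩ := k.eq_nat_or_neg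
  · simpa using shiftEnergy_nsmul_le hf z n
  · simpa [shiftEnergy_neg] using shiftEnergy_nsmul_le hf z n

lemma sq_posPart_sub_posPart_le (a b : ℝ) : (a⁺ - b⁺) ^ 2 ≤ (a⁺ - b⁺) * (a - b) := by
  rcases le_total a 0 with ha | ha <;> rcases le_total b 0 with hb | hb <;>
    simp only [posPart_eq_zero.2, posPart_eq_self.2, ha, hb] <;> nlinarith

end ShiftEnergy

section Truncation

variable {d : ℕ} {A : Set (Site d)} {e : Site d → ℝ}

/-- The discrete Dirichlet energy `(1/2d) ∑_{x ∼ y} (f x - f y)²` of `f : ℤ^d → ℝ`, each edge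
being counted once. -/
def dirichletEnergy (f : Site d → ℝ) : ℝ :=
  1 / (2 * (d : ℝ)) * ∑ i, shiftEnergy f (unitVec d i)

lemma IsExitFun.posPart_sub_eq_zero (he : IsExitFun d A e) {t : ℝ} (ht : 0 ≤ t) {x : Site d}
    (hx : x ∉ A) : (e x - t)⁺ = 0 := by
  rw [he.1 x hx, zero_sub, posPart_eq_zero]
  exact neg_nonpos.2 ht

lemma IsExitFun.dirichletEnergy_posPart_sub_le (hd : 1 ≤ d) (hA : A.Finite)
    (he : IsExitFun d A e) {t : ℝ}
    (ht : 0 ≤ t) : dirichletEnergy (fun x => (e x - t)⁺) ≤ ∑' x, (e x - t)⁺ := by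
  set f : Site d → ℝ := fun x => (e x - t)⁺
  have hf₀ {x : Site d} (hx : x ∉ A) : f x = 0 := he.posPart_sub_eq_zero ht hx
  have hf : f.HasFiniteSupport := hA.subset fun x hx => by_contra fun h => hx (hf₀ h)
  have hsum (i : Fin d) :
      Summable fun x => f x * (2 * e x - (e (x + unitVec d i) + e (x - unitVec d i))) :=
    summable_of_hasFiniteSupport (hf.fun_mul_left _)
  have hdir (i : Fin d) : shiftEnergy f (unitVec d i)
      ≤ ∑' x, f x * (2 * e x - (e (x + unitVec d i) + e (x - unitVec d i))) := by
    rw [← tsum_sub_mul_sub_eq_tsum_mul_second_difference hf]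
    refine (summable_sq_sub_comp_add hf _).tsum_le_tsum (fun x => ?_)
      (summable_of_hasFiniteSupport ((hasFiniteSupport_sub_comp_add_right hf _).fun_mul_left _))
    simpa using sq_posPart_sub_posPart_le (e (x + unitVec d i) - t) (e x - t)
  calc dirichletEnergy f
      ≤ 1 / (2 * (d : ℝ)) *
          ∑ i, ∑' x, f x * (2 * e x - (e (x + unitVec d i) + e (x - unitVec d i))) := by
        rw [dirichletEnergy]
        gcongr with i
        exact hdir i
    _ = ∑' x, 1 / (2 * (d : ℝ)) *
          ∑ i, f x * (2 * e x - (e (x + unitVec d i) + e (x - unitVec d i))) := by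
        rw [← Summable.tsum_finsetSum fun i _ => hsum i, tsum_mul_left]
    _ = ∑' x, f x * -laplacian d e x := by
        refine tsum_congr fun x => ?_
        rw [← Finset.mul_sum, Finset.sum_sub_distrib, laplacian_apply]
        simp only [Finset.sum_const, Finset.card_univ, Fintype.card_fin, nsmul_eq_mul]
        field_simp
        ring
    _ = ∑' x, f x := by
        refine tsum_congr fun x => ?_
        by_cases hx : x ∈ A
        · rw [he.laplacian_eq hx, neg_neg, mul_one]
        · rw [hf₀ hx, zero_mul]

end Truncation

/-! ### Polarization -/

section Reflection

variable {E : Type*} [NormedAddCommGroup E] [InnerProductSpace ℝ E]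

/-- The reflection in the hyperplane `{x | ⟪n, x⟫ = c}` with unit normal `n`. -/
def reflect (n : Metric.sphere (0 : E) 1) (c : ℝ) : E ≃ᵢ E :=
  (ℝ ∙ (n : E))ᗮ.reflection.toIsometryEquiv.trans (IsometryEquiv.addRight ((2 * c) • (n : E)))

variable (n : Metric.sphere (0 : E) 1) (c : ℝ)

lemma reflect_apply (x : E) : reflect n c x = x + (2 * (c - inner ℝ (n : E) x)) • (n : E) := by
  have h : reflect n c x = (ℝ ∙ (n : E))ᗮ.reflection x + (2 * c) • (n : E) := rfl
  rw [h, Submodule.reflection_orthogonal_apply, Submodule.reflection_singleton_apply,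
    norm_eq_of_mem_sphere n]
  simp only [RCLike.ofReal_one, one_pow, div_one]
  module

lemma inner_reflect (x : E) : inner ℝ (n : E) (reflect n c x) = 2 * c - inner ℝ (n : E) x := by
  rw [reflect_apply, inner_add_right, inner_smul_right, inner_self_eq_one_of_norm_eq_one
    (norm_eq_of_mem_sphere n)]
  ring

lemma reflect_reflect (x : E) : reflect n c (reflect n c x) = x := by
  rw [reflect_apply n c (reflect n c x), inner_reflect, reflect_apply]
  module

lemma norm_reflect_sub_sq (x y : E) : ‖reflect n c x - y‖ ^ 2 =
    ‖x - y‖ ^ 2 + 4 * (c - inner ℝ (n : E) x) * (c - inner ℝ (n : E) y) := by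
  rw [reflect_apply, add_sub_right_comm, norm_add_sq_real, inner_smul_right, norm_smul,
    norm_eq_of_mem_sphere n, inner_sub_left, real_inner_comm (n : E) x, real_inner_comm (n : E) y,
    mul_one, Real.norm_eq_abs, sq_abs]
  ring

variable {n c}

lemma norm_sub_le_norm_reflect_sub {x y : E} (hx : inner ℝ (n : E) x ≤ c)
    (hy : inner ℝ (n : E) y ≤ c) : ‖x - y‖ ≤ ‖reflect n c x - y‖ := by
  rw [← sq_le_sq₀ (norm_nonneg _) (norm_nonneg _), norm_reflect_sub_sq]
  linarith [mul_nonneg (sub_nonneg.2 hx) (sub_nonneg.2 hy)]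

lemma norm_le_norm_reflect (hc : 0 ≤ c) {x : E} (hx : inner ℝ (n : E) x ≤ c) :
    ‖x‖ ≤ ‖reflect n c x‖ := by
  simpa using norm_sub_le_norm_reflect_sub hx (y := 0) (by simpa using hc)

lemma inner_reflect_le {x : E} (hx : c ≤ inner ℝ (n : E) x) :
    inner ℝ (n : E) (reflect n c x) ≤ c := by
  rw [inner_reflect]; linarith

lemma forall_of_forall_inner_le {p : E → Prop} (hp : ∀ x, p (reflect n c x) → p x)
    (h : ∀ x, inner ℝ (n : E) x ≤ c → p x) (x : E) : p x :=
  (le_total (inner ℝ (n : E) x) c).elim (h x) fun hx => hp x (h _ (inner_reflect_le hx))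

variable (n c) in
/-- The polarization (two-point symmetrization) of `F`: of the two values of `F` at a pair of mirror
points, the larger one is moved to the half-space `{x | ⟪n, x⟫ ≤ c}`. -/
def polarize (F : E → ℝ) (x : E) : ℝ :=
  if inner ℝ (n : E) x ≤ c then max (F x) (F (reflect n c x)) else min (F x) (F (reflect n c x))

variable {F : E → ℝ} {x : E}

lemma polarize_of_inner_le (hx : inner ℝ (n : E) x ≤ c) :
    polarize n c F x = max (F x) (F (reflect n c x)) := if_pos hx

lemma polarize_reflect_of_inner_le (hx : inner ℝ (n : E) x ≤ c) :
    polarize n c F (reflect n c x) = min (F x) (F (reflect n c x)) := by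
  rcases hx.lt_or_eq with hlt | heq
  · rw [polarize, if_neg (by rw [inner_reflect]; linarith), reflect_reflect, min_comm]
  · have hfix : reflect n c x = x := by simp [reflect_apply, heq]
    rw [hfix, polarize_of_inner_le hx, hfix, max_self, min_self]

end Reflection

/-- The class of nonnegative measurable functions that are bounded by `M` and vanish outside the
open ball of radius `L`. -/
structure IsProfile {E : Type*} [Norm E] [MeasurableSpace E] (L M : ℝ) (F : E → ℝ) :
    Prop where
  measurable : Measurable F
  nonneg : ∀ x, 0 ≤ F x
  le : ∀ x, F x ≤ M
  eq_zero : ∀ x, L ≤ ‖x‖ → F x = 0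

namespace IsProfile

variable {E : Type*} [NormedAddCommGroup E] [MeasurableSpace E] {L M : ℝ} {F : E → ℝ}

lemma support_subset (h : IsProfile L M F) : Function.support F ⊆ Metric.ball 0 L :=
  fun x hx => mem_ball_zero_iff.2 (not_le.1 fun hL => hx (h.eq_zero x hL))

lemma mem_support_iff (h : IsProfile L M F) {x : E} : x ∈ Function.support F ↔ 0 < F x :=
  (h.nonneg x).lt_iff_ne'.symm

end IsProfile

section PolarizationMeasure

variable {E : Type*} [NormedAddCommGroup E] [MeasurableSpace E]

lemma integrable_of_bounded_of_eq_zero [ProperSpace E] {μ : Measure E} [IsFiniteMeasureOnCompacts μ]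
    {g : E → ℝ} {C K : ℝ} (hg : Measurable g) (hC : ∀ x, |g x| ≤ C)
    (hK : ∀ x, K ≤ ‖x‖ → g x = 0) : Integrable g μ := by
  have hint : IntegrableOn g (Metric.closedBall 0 K) μ :=
    Measure.integrableOn_of_bounded (M := C) measure_closedBall_lt_top.ne
      hg.aestronglyMeasurable (Eventually.of_forall hC)
  exact hint.integrable_of_forall_notMem_eq_zero fun x hx =>
    hK x (not_le.1 fun hle => hx (mem_closedBall_zero_iff.2 hle)).le

variable [InnerProductSpace ℝ E] [BorelSpace E] {L M R c : ℝ} {F : E → ℝ}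

/-- The points of `ball 0 R` off the support of `F` whose mirror image is a point of the support
off `ball 0 R`; polarization moves the support onto these points. -/
def transferSet (R : ℝ) (F : E → ℝ) (n : Metric.sphere (0 : E) 1) (c : ℝ) : Set E :=
  (Metric.ball 0 R \ Function.support F) ∩ reflect n c ⁻¹' (Function.support F \ Metric.ball 0 R)

lemma measurableSet_transferSet (hF : Measurable F) (n : Metric.sphere (0 : E) 1) :
    MeasurableSet (transferSet R F n c) :=
  (measurableSet_ball.diff (measurableSet_support hF)).inter
    ((reflect n c).continuous.measurable ((measurableSet_support hF).diff measurableSet_ball))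

variable [FiniteDimensional ℝ E]

lemma isProfile_polarize (h : IsProfile L M F) (n : Metric.sphere (0 : E) 1) (hc : 0 ≤ c) :
    IsProfile L M (polarize n c F) where
  measurable := by
    have hF := h.measurable.comp (reflect n c).continuous.measurable
    exact Measurable.ite (measurableSet_le (by fun_prop) measurable_const)
      (h.measurable.max hF) (h.measurable.min hF)
  nonneg x := by
    unfold polarize
    split_ifs <;> simp [h.nonneg]
  le x := by
    unfold polarize
    split_ifs <;> simp [h.le]
  eq_zero x hx := by
    by_cases hxc : inner ℝ (n : E) x ≤ c
    · rw [polarize_of_inner_le hxc, h.eq_zero x hx,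
        h.eq_zero _ (hx.trans (norm_le_norm_reflect hc hxc)), max_self]
    · rw [polarize, if_neg hxc, h.eq_zero x hx, min_eq_left (h.nonneg _)]

lemma IsProfile.integrable (h : IsProfile L M F) : Integrable F :=
  have : ProperSpace E := FiniteDimensional.proper ℝ E
  integrable_of_bounded_of_eq_zero h.measurable
    (fun x => (abs_of_nonneg (h.nonneg x)).trans_le (h.le x)) h.eq_zero

lemma measurePreserving_reflect (n : Metric.sphere (0 : E) 1) (c : ℝ) :
    MeasurePreserving (reflect n c) :=
  (measurePreserving_add_right volume _).comp (LinearIsometryEquiv.measurePreserving _)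

lemma integral_le_of_add_reflect_le {n : Metric.sphere (0 : E) 1} {g h : E → ℝ}
    (hg : Integrable g) (hh : Integrable h) (hle : ∀ x, inner ℝ (n : E) x ≤ c →
      g x + g (reflect n c x) ≤ h x + h (reflect n c x)) : ∫ x, g x ≤ ∫ x, h x := by
  have hσ := measurePreserving_reflect n c
  have hemb := (reflect n c).toHomeomorph.measurableEmbedding
  have hint {k : E → ℝ} (hk : Integrable k) :
      ∫ x, (k x + k (reflect n c x)) = 2 * ∫ x, k x := by
    have hkσ : Integrable fun x => k (reflect n c x) := (hσ.integrable_comp_emb hemb).2 hk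
    have hinv : ∫ x, k (reflect n c x) = ∫ x, k x := hσ.integral_comp hemb k
    rw [integral_add hk hkσ, hinv, two_mul]
  have hmono : ∫ x, (g x + g (reflect n c x)) ≤ ∫ x, (h x + h (reflect n c x)) :=
    integral_mono (hg.add ((hσ.integrable_comp_emb hemb).2 hg))
      (hh.add ((hσ.integrable_comp_emb hemb).2 hh))
      (forall_of_forall_inner_le (fun x hx => by
        simp only [reflect_reflect] at hx
        simp only
        linarith) hle)
  rw [hint hg, hint hh] at hmono
  linarith

lemma integral_polarize (h : IsProfile L M F) (n : Metric.sphere (0 : E) 1)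
    (hc : 0 ≤ c) : ∫ x, polarize n c F x = ∫ x, F x := by
  have hpair (x : E) (hx : inner ℝ (n : E) x ≤ c) : polarize n c F x +
      polarize n c F (reflect n c x) = F x + F (reflect n c x) := by
    rw [polarize_of_inner_le hx, polarize_reflect_of_inner_le hx, max_add_min]
  exact le_antisymm
    (integral_le_of_add_reflect_le (isProfile_polarize h n hc).integrable h.integrable
      fun x hx => (hpair x hx).le)
    (integral_le_of_add_reflect_le h.integrable (isProfile_polarize h n hc).integrable
      fun x hx => (hpair x hx).ge)

lemma integrable_indicator_one {s : Set E} (hs : MeasurableSet s) (hL : s ⊆ Metric.ball 0 L) :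
    Integrable (s.indicator (1 : E → ℝ)) :=
  have : ProperSpace E := FiniteDimensional.proper ℝ E
  (integrable_indicator_iff hs).2
    (integrableOn_const (ne_top_of_le_ne_top measure_ball_lt_top.ne (measure_mono hL)))

lemma measureReal_support_polarize_le (h : IsProfile L M F) (n : Metric.sphere (0 : E) 1)
    (hc : 0 ≤ c) :
    volume.real (Function.support (polarize n c F)) ≤ volume.real (Function.support F) := by
  have hp := isProfile_polarize h n hc
  have hm := measurableSet_support h.measurable
  have hmp := measurableSet_support hp.measurable
  rw [← integral_indicator_one hm, ← integral_indicator_one hmp]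
  refine integral_le_of_add_reflect_le (n := n) (c := c)
    (integrable_indicator_one hmp hp.support_subset)
    (integrable_indicator_one hm h.support_subset) fun x hx => ?_
  simp only [Set.indicator_apply, h.mem_support_iff, hp.mem_support_iff, polarize_of_inner_le hx,
    polarize_reflect_of_inner_le hx, lt_max_iff, lt_min_iff, Pi.one_apply]
  by_cases hFx : 0 < F x <;> by_cases hFy : 0 < F (reflect n c x) <;> simp [hFx, hFy]

lemma measureReal_support_polarize_sdiff_ball_add_le (h : IsProfile L M F)
    (n : Metric.sphere (0 : E) 1) (hc : 0 ≤ c) :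
    volume.real (Function.support (polarize n c F) \ Metric.ball 0 R) +
      volume.real (transferSet R F n c) ≤ volume.real (Function.support F \ Metric.ball 0 R) := by
  have hp := isProfile_polarize h n hc
  have hm := (measurableSet_support h.measurable).diff
    (measurableSet_ball (x := (0 : E)) (ε := R))
  have hmp := (measurableSet_support hp.measurable).diff
    (measurableSet_ball (x := (0 : E)) (ε := R))
  have hmT := measurableSet_transferSet h.measurable n (R := R) (c := c)
  have hi := integrable_indicator_one hm (Set.sdiff_subset.trans h.support_subset)
  have hip := integrable_indicator_one hmp (Set.sdiff_subset.trans hp.support_subset)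
  have hiT := integrable_indicator_one hmT (Set.inter_subset_left.trans Set.sdiff_subset)
  rw [← integral_indicator_one hm, ← integral_indicator_one hmp, ← integral_indicator_one hmT,
    ← integral_add hip hiT]
  refine integral_le_of_add_reflect_le (n := n) (c := c) (hip.add hiT) hi fun x hx => ?_
  have hnorm := norm_le_norm_reflect hc hx
  simp only [Set.indicator_apply, transferSet, Set.mem_sdiff, Set.mem_inter_iff,
    Set.mem_preimage, h.mem_support_iff, hp.mem_support_iff, polarize_of_inner_le hx,
    polarize_reflect_of_inner_le hx, lt_max_iff, lt_min_iff, Pi.one_apply, mem_ball_zero_iff,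
    reflect_reflect]
  by_cases hFx : 0 < F x <;> by_cases hFy : 0 < F (reflect n c x) <;>
    by_cases hxR : ‖x‖ < R <;> by_cases hyR : ‖reflect n c x‖ < R <;>
    first
    | exact absurd (hnorm.trans_lt hyR) hxR
    | simp [hFx, hFy, hxR, hyR]

end PolarizationMeasure

/-! ### The nonlocal energy -/

section Energy

variable {E : Type*} [NormedAddCommGroup E]

/-- The integrand of the energy `energyForm`. -/
def energyDensity (ρ : ℝ) (F G : E → ℝ) (z : E × E) : ℝ :=
  if dist z.1 z.2 < ρ then (F z.1 - F z.2) * (G z.1 - G z.2) else 0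

/-- The sum of `g` over the four pairs obtained from `(x, y)` by reflecting either point. -/
def mirrorSum [InnerProductSpace ℝ E] (n : Metric.sphere (0 : E) 1) (c : ℝ) (g : E × E → ℝ)
    (x y : E) : ℝ :=
  g (x, y) + g (reflect n c x, y) + g (x, reflect n c y) + g (reflect n c x, reflect n c y)

lemma mirrorSum_energyDensity_polarize_le [InnerProductSpace ℝ E] (ρ : ℝ) (F : E → ℝ)
    {n : Metric.sphere (0 : E) 1} {c : ℝ} {x y : E} (hx : inner ℝ (n : E) x ≤ c)
    (hy : inner ℝ (n : E) y ≤ c) :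
    mirrorSum n c (energyDensity ρ (polarize n c F) (polarize n c F)) x y ≤
      mirrorSum n c (energyDensity ρ F F) x y := by
  have hdist : dist x y ≤ dist (reflect n c x) y := by
    simpa only [dist_eq_norm] using norm_sub_le_norm_reflect_sub hx hy
  have hcross : dist x (reflect n c y) = dist (reflect n c x) y := by
    rw [← (reflect n c).dist_eq, reflect_reflect]
  simp only [mirrorSum, energyDensity, (reflect n c).dist_eq, hcross, polarize_of_inner_le hx,
    polarize_of_inner_le hy, polarize_reflect_of_inner_le hx, polarize_reflect_of_inner_le hy]
  generalize F x = a, F (reflect n c x) = a', F y = b, F (reflect n c y) = b'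
  by_cases hnear : dist x y < ρ
  · by_cases hfar : dist (reflect n c x) y < ρ
    · simp only [if_pos hnear, if_pos hfar]
      rcases le_total a a' with ha | ha <;> rcases le_total b b' with hb | hb <;>
        simp only [ha, hb, max_eq_left, max_eq_right, min_eq_left, min_eq_right] <;> linarith
    · simp only [if_pos hnear, if_neg hfar]
      rcases le_total a a' with ha | ha <;> rcases le_total b b' with hb | hb <;>
        simp only [ha, hb, max_eq_left, max_eq_right, min_eq_left, min_eq_right] <;>
        nlinarith [mul_nonneg (sub_nonneg.2 ha) (sub_nonneg.2 hb)]
  · have hfar : ¬ dist (reflect n c x) y < ρ := fun h => hnear (hdist.trans_lt h)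
    simp only [if_neg hnear, if_neg hfar, le_refl]

lemma measurable_energyDensity [MeasurableSpace E] [BorelSpace E] [SecondCountableTopology E]
    (ρ : ℝ) {F G : E → ℝ} (hF : Measurable F) (hG : Measurable G) :
    Measurable (energyDensity ρ F G) := by
  refine Measurable.ite (measurableSet_lt (by fun_prop) measurable_const) ?_ measurable_const
  exact ((hF.comp measurable_fst).sub (hF.comp measurable_snd)).mul
    ((hG.comp measurable_fst).sub (hG.comp measurable_snd))

variable [InnerProductSpace ℝ E] [FiniteDimensional ℝ E] [MeasurableSpace E] [BorelSpace E]
  {L L' M M' ρ c : ℝ} {F G : E → ℝ}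

lemma integrable_of_bounded_of_near_diagonal {g : E × E → ℝ} {C : ℝ} (hg : Measurable g)
    (hC : ∀ z, |g z| ≤ C) (hfar : ∀ z : E × E, ρ ≤ dist z.1 z.2 → g z = 0)
    (hL : ∀ z : E × E, L ≤ ‖z.1‖ → L ≤ ‖z.2‖ → g z = 0) : Integrable g := by
  have : ProperSpace E := FiniteDimensional.proper ℝ E
  refine integrable_of_bounded_of_eq_zero (K := L + max ρ 0) hg hC fun z hz => ?_
  rcases le_or_gt ρ (dist z.1 z.2) with hρ | hρ
  · exact hfar z hρ
  have hle : dist z.1 z.2 ≤ max ρ 0 := hρ.le.trans (le_max_left _ _)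
  have hpos : 0 ≤ max ρ 0 := le_max_right _ _
  rw [dist_eq_norm] at hle
  have h₁ := norm_le_norm_add_norm_sub' z.1 z.2
  have h₂ := norm_le_norm_add_norm_sub z.1 z.2
  refine hL z ?_ ?_ <;> rcases le_max_iff.1 (Prod.norm_def z ▸ hz) with hz | hz <;> linarith

lemma IsProfile.integrable_energyDensity (hF : IsProfile L M F) (hG : IsProfile L' M' G) (ρ : ℝ) :
    Integrable (energyDensity ρ F G) := by
  refine integrable_of_bounded_of_near_diagonal (C := M * M') (ρ := ρ) (L := L)
    (measurable_energyDensity ρ hF.measurable hG.measurable) (fun z => ?_)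
    (fun z hz => if_neg hz.not_gt) fun z h₁ h₂ => ?_
  · have hM : 0 ≤ M := (hF.nonneg 0).trans (hF.le 0)
    have hM' : 0 ≤ M' := (hG.nonneg 0).trans (hG.le 0)
    unfold energyDensity
    split_ifs
    · rw [abs_mul]
      exact mul_le_mul (abs_sub_le_of_nonneg_of_le (hF.nonneg _) (hF.le _) (hF.nonneg _) (hF.le _))
        (abs_sub_le_of_nonneg_of_le (hG.nonneg _) (hG.le _) (hG.nonneg _) (hG.le _))
        (abs_nonneg _) hM
    · simpa using mul_nonneg hM hM'
  · simp [energyDensity, hF.eq_zero _ h₁, hF.eq_zero _ h₂]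

/-- The symmetric bilinear form of the nonlocal energy
`∬_{‖x - y‖ < ρ} (F x - F y)²`. -/
def energyForm (ρ : ℝ) (F G : E → ℝ) : ℝ := ∫ z, energyDensity ρ F G z

lemma two_mul_energyForm_le (hF : IsProfile L M F) (hG : IsProfile L' M' G) (ρ c : ℝ) :
    2 * c * energyForm ρ F G ≤ energyForm ρ F F + c ^ 2 * energyForm ρ G G := by
  unfold energyForm
  rw [← integral_const_mul, ← integral_const_mul,
    ← integral_add (hF.integrable_energyDensity hF ρ)
      ((hG.integrable_energyDensity hG ρ).const_mul _)]
  refine integral_mono ((hF.integrable_energyDensity hG ρ).const_mul _)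
    ((hF.integrable_energyDensity hF ρ).add ((hG.integrable_energyDensity hG ρ).const_mul _))
    fun z => ?_
  simp only [energyDensity]
  split_ifs
  · linarith [sq_nonneg (F z.1 - F z.2 - c * (G z.1 - G z.2))]
  · simp

lemma integral_mirrorSum (n : Metric.sphere (0 : E) 1) (c : ℝ) {g : E × E → ℝ}
    (hg : Integrable g) :
    Integrable (fun z : E × E => mirrorSum n c g z.1 z.2) ∧
      ∫ z : E × E, mirrorSum n c g z.1 z.2 = 4 * ∫ z, g z := by
  let σ := (reflect n c).toHomeomorph.toMeasurableEquiv
  have hσ : MeasurePreserving σ := measurePreserving_reflect n c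
  have hσ₁ : MeasurePreserving (σ.prodCongr (.refl E)) := hσ.prod (.id volume)
  have hσ₂ : MeasurePreserving ((MeasurableEquiv.refl E).prodCongr σ) :=
    (MeasurePreserving.id volume).prod hσ
  have hσ₁₂ : MeasurePreserving (σ.prodCongr σ) := hσ.prod hσ
  have hg₁ : Integrable fun z : E × E => g (reflect n c z.1, z.2) :=
    hσ₁.integrable_comp_of_integrable hg
  have hg₂ : Integrable fun z : E × E => g (z.1, reflect n c z.2) :=
    hσ₂.integrable_comp_of_integrable hg
  have hg₁₂ : Integrable fun z : E × E => g (reflect n c z.1, reflect n c z.2) :=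
    hσ₁₂.integrable_comp_of_integrable hg
  have h₁ : ∫ z : E × E, g (reflect n c z.1, z.2) = ∫ z, g z := hσ₁.integral_comp' g
  have h₂ : ∫ z : E × E, g (z.1, reflect n c z.2) = ∫ z, g z := hσ₂.integral_comp' g
  have h₁₂ : ∫ z : E × E, g (reflect n c z.1, reflect n c z.2) = ∫ z, g z :=
    hσ₁₂.integral_comp' g
  have hg₀₁ : Integrable fun z : E × E => g z + g (reflect n c z.1, z.2) := hg.add hg₁
  have hg₀₁₂ : Integrable fun z : E × E => g z + g (reflect n c z.1, z.2) +
      g (z.1, reflect n c z.2) := hg₀₁.add hg₂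
  refine ⟨hg₀₁₂.add hg₁₂, ?_⟩
  simp only [mirrorSum]
  rw [integral_add hg₀₁₂ hg₁₂, integral_add hg₀₁ hg₂,
    integral_add hg hg₁, h₁, h₂, h₁₂]
  ring

lemma integral_le_of_mirrorSum_le {n : Metric.sphere (0 : E) 1} {g h : E × E → ℝ}
    (hg : Integrable g) (hh : Integrable h)
    (hle : ∀ x y, inner ℝ (n : E) x ≤ c → inner ℝ (n : E) y ≤ c →
      mirrorSum n c g x y ≤ mirrorSum n c h x y) : ∫ z, g z ≤ ∫ z, h z := by
  have hmirror (k : E × E → ℝ) (x y : E) :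
      mirrorSum n c k (reflect n c x) y = mirrorSum n c k x y ∧
      mirrorSum n c k x (reflect n c y) = mirrorSum n c k x y := by
    constructor <;> simp only [mirrorSum, reflect_reflect] <;> ring
  have hall (x y : E) : mirrorSum n c g x y ≤ mirrorSum n c h x y := by
    refine forall_of_forall_inner_le (n := n) (c := c)
      (p := fun x => mirrorSum n c g x y ≤ mirrorSum n c h x y) (fun x hx => ?_) (fun x hx => ?_) x
    · rwa [(hmirror g x y).1, (hmirror h x y).1] at hx
    · refine forall_of_forall_inner_le (n := n) (c := c)
        (p := fun y => mirrorSum n c g x y ≤ mirrorSum n c h x y) (fun y hy => ?_) (hle x · hx) y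
      rwa [(hmirror g x y).2, (hmirror h x y).2] at hy
  have hmono := integral_mono (integral_mirrorSum n c hg).1 (integral_mirrorSum n c hh).1
    fun z => hall z.1 z.2
  rw [(integral_mirrorSum n c hg).2, (integral_mirrorSum n c hh).2] at hmono
  linarith

lemma energyForm_polarize_le (h : IsProfile L M F) (n : Metric.sphere (0 : E) 1) (hc : 0 ≤ c) :
    energyForm ρ (polarize n c F) (polarize n c F) ≤ energyForm ρ F F :=
  have hp := isProfile_polarize h n hc
  integral_le_of_mirrorSum_le (hp.integrable_energyDensity hp ρ) (h.integrable_energyDensity h ρ)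
    fun _ _ hx hy => mirrorSum_energyDensity_polarize_le ρ F hx hy

/-- The nonlocal operator associated with `energyForm`, with the sign that makes it positive. -/
def nonlocalLaplacian (ρ : ℝ) (G : E → ℝ) (x : E) : ℝ := ∫ y in Metric.ball x ρ, (G x - G y)

lemma integrable_mul_sub_near_diagonal (hF : IsProfile L M F) (hG : IsProfile L' M' G) (ρ : ℝ) :
    Integrable fun z : E × E => if dist z.1 z.2 < ρ then F z.1 * (G z.1 - G z.2) else 0 := by
  have hmeas : Measurable fun z : E × E =>
      if dist z.1 z.2 < ρ then F z.1 * (G z.1 - G z.2) else 0 :=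
    Measurable.ite (measurableSet_lt (by fun_prop) measurable_const)
      ((hF.measurable.comp measurable_fst).mul ((hG.measurable.comp measurable_fst).sub
        (hG.measurable.comp measurable_snd))) measurable_const
  refine integrable_of_bounded_of_near_diagonal (C := M * M') (ρ := ρ) (L := L) hmeas
    (fun z => ?_) (fun z hz => if_neg hz.not_gt) fun z h₁ _ => by simp [hF.eq_zero _ h₁]
  have hM : 0 ≤ M := (hF.nonneg 0).trans (hF.le 0)
  have hM' : 0 ≤ M' := (hG.nonneg 0).trans (hG.le 0)
  split_ifs
  · rw [abs_mul, abs_of_nonneg (hF.nonneg _)]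
    exact mul_le_mul (hF.le _) (abs_sub_le_of_nonneg_of_le (hG.nonneg _) (hG.le _)
      (hG.nonneg _) (hG.le _)) (abs_nonneg _) hM
  · simpa using mul_nonneg hM hM'

lemma integral_mul_sub_near_diagonal (F G : E → ℝ) (ρ : ℝ) (x : E) :
    ∫ y, (if dist x y < ρ then F x * (G x - G y) else 0) = F x * nonlocalLaplacian ρ G x := by
  rw [nonlocalLaplacian, ← integral_indicator measurableSet_ball, ← integral_const_mul]
  congr with y
  simp [Set.indicator_apply, dist_comm]

lemma integrable_mul_nonlocalLaplacian (hF : IsProfile L M F) (hG : IsProfile L' M' G) (ρ : ℝ) :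
    Integrable fun x => F x * nonlocalLaplacian ρ G x :=
  (integrable_mul_sub_near_diagonal hF hG ρ).integral_prod_left.congr
    (.of_forall (integral_mul_sub_near_diagonal F G ρ))

lemma energyForm_eq_two_mul_integral (hF : IsProfile L M F) (hG : IsProfile L' M' G) (ρ : ℝ) :
    energyForm ρ F G = 2 * ∫ x, F x * nonlocalLaplacian ρ G x := by
  let u (z : E × E) : ℝ := if dist z.1 z.2 < ρ then F z.1 * (G z.1 - G z.2) else 0
  have hu : Integrable u := integrable_mul_sub_near_diagonal hF hG ρ
  have hsplit (z : E × E) : energyDensity ρ F G z = u z + u z.swap := by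
    simp only [energyDensity, u, Prod.fst_swap, Prod.snd_swap, dist_comm z.2 z.1]
    split_ifs <;> ring
  have hswap : Integrable fun z : E × E => u z.swap := hu.swap
  have hinv : ∫ z : E × E, u z.swap = ∫ z, u z := integral_prod_swap u
  calc energyForm ρ F G = ∫ z, (u z + u z.swap) := integral_congr_ae (.of_forall hsplit)
    _ = 2 * ∫ z, u z := by rw [integral_add hu hswap, hinv, two_mul]
    _ = 2 * ∫ x, F x * nonlocalLaplacian ρ G x := by
      rw [Measure.volume_eq_prod, integral_prod u hu]
      simp only [u, integral_mul_sub_near_diagonal F G ρ]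

end Energy

/-! ### Averaging over reflections -/

section Averaging

open Metric Measure

lemma lintegral_eq_lintegral_sphere_lintegral_Ioi {E : Type*} [NormedAddCommGroup E]
    [NormedSpace ℝ E] [FiniteDimensional ℝ E] [Nontrivial E] [MeasurableSpace E] [BorelSpace E]
    (μ : Measure E) [μ.IsAddHaarMeasure] {g : E → ENNReal} (hg : Measurable g) :
    ∫⁻ x, g x ∂μ = ∫⁻ n, ∫⁻ r in Set.Ioi (0 : ℝ),
      ENNReal.ofReal (r ^ (Module.finrank ℝ E - 1)) * g (r • (n : E)) ∂volume ∂μ.toSphere := by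
  have hm : Measurable fun p : sphere (0 : E) 1 × Set.Ioi (0 : ℝ) => g (p.2.1 • p.1.1) :=
    hg.comp (by fun_prop)
  calc ∫⁻ x, g x ∂μ = ∫⁻ x in ({0}ᶜ : Set E), g x ∂μ := by
        rw [restrict_compl_singleton]
    _ = ∫⁻ x : ({0}ᶜ : Set E), g x ∂μ.comap (↑) :=
        (lintegral_subtype_comap (measurableSet_singleton _).compl g).symm
    _ = ∫⁻ p, g (p.2.1 • p.1.1) ∂(μ.toSphere.prod (volumeIoiPow (Module.finrank ℝ E - 1))) := by
        rw [← μ.measurePreserving_homeomorphUnitSphereProd.lintegral_comp hm]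
        refine lintegral_congr fun x => ?_
        rw [← homeomorphUnitSphereProd_symm_apply_coe, Homeomorph.symm_apply_apply]
    _ = ∫⁻ n, ∫⁻ r, g (r.1 • n.1) ∂volumeIoiPow (Module.finrank ℝ E - 1) ∂μ.toSphere :=
        lintegral_prod _ hm.aemeasurable
    _ = _ := by
        refine lintegral_congr fun n => ?_
        have hgn : Measurable fun r : Set.Ioi (0 : ℝ) => g (r.1 • n.1) := hg.comp (by fun_prop)
        rw [volumeIoiPow, lintegral_withDensity_eq_lintegral_mul _ (by fun_prop) hgn]
        exact lintegral_subtype_comap measurableSet_Ioi fun r =>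
          ENNReal.ofReal (r ^ (Module.finrank ℝ E - 1)) * g (r • (n : E))

variable {E : Type*} [NormedAddCommGroup E] [InnerProductSpace ℝ E]

lemma mem_Ioo_of_reflect_mem {L s : ℝ} {n : sphere (0 : E) 1} {y : E}
    (hs : 2 * inner ℝ (n : E) y < s) (hlt : ‖y‖ < ‖reflect n (s / 2) y‖)
    (hL : ‖reflect n (s / 2) y‖ < L) :
    s ∈ Set.Ioo 0 (2 * L) ∧ s - 2 * inner ℝ (n : E) y ≤ 2 * L := by
  have hinner : inner ℝ (n : E) (reflect n (s / 2) y) = s - inner ℝ (n : E) y := by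
    rw [inner_reflect]; ring
  have habs (x : E) : |inner ℝ (n : E) x| ≤ ‖x‖ := by
    simpa [norm_eq_of_mem_sphere n] using abs_real_inner_le_norm (n : E) x
  have hy := abs_le.1 (habs y)
  have hσ := abs_le.1 (habs (reflect n (s / 2) y))
  have hs0 : 0 < s := by
    have hsq := norm_reflect_sub_sq n (s / 2) y 0
    simp only [sub_zero, inner_zero_right] at hsq
    have := pow_lt_pow_left₀ hlt (norm_nonneg y) two_ne_zero
    exact pos_of_mul_pos_right (a := s - 2 * inner ℝ (n : E) y) (by linarith) (by linarith)
  exact ⟨⟨hs0, by linarith⟩, by linarith⟩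

lemma exists_lt_of_forall_exists_add_mul_sq_le {α : Type*} {s : Set α} {m : α → ℝ} {κ ε : ℝ}
    (hs : s.Nonempty) (hm : ∀ a, 0 ≤ m a) (hκ : 0 < κ) (hε : 0 < ε)
    (hstep : ∀ a ∈ s, ∃ b ∈ s, m b + κ * m a ^ 2 ≤ m a) : ∃ a ∈ s, m a < ε := by
  by_contra! hge
  have hbdd : BddBelow (m '' s) := ⟨0, by rintro _ ⟨a, -, rfl⟩; exact hm a⟩
  obtain ⟨_, ⟨a, ha, rfl⟩, hlt⟩ := exists_lt_of_csInf_lt (hs.image m)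
    (lt_add_of_pos_right _ (by positivity : 0 < κ * ε ^ 2))
  obtain ⟨b, hb, hle⟩ := hstep a ha
  have hsq : κ * ε ^ 2 ≤ κ * m a ^ 2 := by gcongr; exact hge a ha
  linarith [csInf_le hbdd (Set.mem_image_of_mem m hb)]

lemma measureReal_sdiff_le_measureReal_sdiff {α : Type*} [MeasurableSpace α] {μ : Measure α}
    {s t : Set α} (hs : MeasurableSet s) (ht : MeasurableSet t) (hst : μ.real s ≤ μ.real t)
    (hs' : μ s ≠ ⊤ := by finiteness) (ht' : μ t ≠ ⊤ := by finiteness) :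
    μ.real (s \ t) ≤ μ.real (t \ s) := by
  have h₁ := measureReal_sdiff_add_inter (μ := μ) (s := s) ht
  have h₂ := measureReal_sdiff_add_inter (μ := μ) (s := t) hs
  rw [Set.inter_comm] at h₂
  linarith

variable [FiniteDimensional ℝ E] [MeasurableSpace E] [BorelSpace E] {R L M ρ : ℝ} {F : E → ℝ}

/-- The profiles which polarization can produce from `F`: same box, no larger support, the same
integral, no larger energy. -/
def symmetrizationClass (ρ L M : ℝ) (F : E → ℝ) : Set (E → ℝ) :=
  {G | IsProfile L M G ∧ volume.real (Function.support G) ≤ volume.real (Function.support F) ∧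
    ∫ x, G x = ∫ x, F x ∧ energyForm ρ G G ≤ energyForm ρ F F}

lemma polarize_mem_symmetrizationClass {G : E → ℝ} (hG : G ∈ symmetrizationClass ρ L M F)
    (n : sphere (0 : E) 1) {c : ℝ} (hc : 0 ≤ c) : polarize n c G ∈ symmetrizationClass ρ L M F :=
  ⟨isProfile_polarize hG.1 n hc, (measureReal_support_polarize_le hG.1 n hc).trans hG.2.1,
    (integral_polarize hG.1 n hc).trans hG.2.2.1,
    (energyForm_polarize_le hG.1 n hc).trans hG.2.2.2⟩

variable [Nontrivial E]

-- Polar coordinates centred at `y`: the point at distance `r` from `y` in direction `n` is the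
-- reflection of `y` in the hyperplane `⟪n, x⟫ = s / 2` with `s = r + 2 ⟪n, y⟫`.
lemma lintegral_eq_lintegral_reflect {g : E → ENNReal} (hg : Measurable g) (y : E) :
    ∫⁻ x, g x = ∫⁻ n, ∫⁻ s in Set.Ioi (2 * inner ℝ (n : E) y),
      ENNReal.ofReal ((s - 2 * inner ℝ (n : E) y) ^ (Module.finrank ℝ E - 1)) *
        g (reflect n (s / 2) y) ∂volume ∂volume.toSphere := by
  have hgy : Measurable fun x => g (y + x) := hg.comp (measurable_const_add y)
  rw [← lintegral_add_left_eq_self g y, lintegral_eq_lintegral_sphere_lintegral_Ioi volume hgy]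
  refine lintegral_congr fun n => ?_
  rw [← lintegral_indicator measurableSet_Ioi, ← lintegral_indicator measurableSet_Ioi,
    ← lintegral_sub_right_eq_self _ (2 * inner ℝ (n : E) y)]
  refine lintegral_congr fun s => ?_
  have hs : 2 * (s / 2 - inner ℝ (n : E) y) = s - 2 * inner ℝ (n : E) y := by ring
  simp only [Set.indicator_apply, Set.mem_Ioi, sub_pos, reflect_apply, hs]

lemma measure_le_lintegral_reflect_mem {D : Set E} (hD : MeasurableSet D)
    (hDL : D ⊆ ball 0 L) {y : E} (hyD : ∀ x ∈ D, ‖y‖ < ‖x‖) :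
    volume D ≤ ENNReal.ofReal ((2 * L) ^ (Module.finrank ℝ E - 1)) *
      ∫⁻ n, ∫⁻ s in Set.Ioo 0 (2 * L), D.indicator 1 (reflect n (s / 2) y)
        ∂volume ∂volume.toSphere := by
  rw [← lintegral_indicator_one hD, lintegral_eq_lintegral_reflect (measurable_one.indicator hD) y,
    ← lintegral_const_mul' _ _ ENNReal.ofReal_ne_top]
  refine lintegral_mono fun n => ?_
  rw [← lintegral_const_mul' _ _ ENNReal.ofReal_ne_top, ← lintegral_indicator measurableSet_Ioi,
    ← lintegral_indicator measurableSet_Ioo]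
  refine lintegral_mono (Set.indicator_le fun s hs => ?_)
  by_cases hσD : reflect n (s / 2) y ∈ D
  · obtain ⟨hsL, hle⟩ := mem_Ioo_of_reflect_mem hs (hyD _ hσD) (mem_ball_zero_iff.1 (hDL hσD))
    rw [Set.indicator_of_mem hsL]
    gcongr
    exact sub_nonneg.2 hs.le
  · rw [Set.indicator_of_notMem hσD, mul_zero]
    exact zero_le

lemma measure_mul_measure_le_lintegral {A D : Set E} (hA : MeasurableSet A)
    (hD : MeasurableSet D) (hDL : D ⊆ ball 0 L) (hAD : ∀ a ∈ A, ∀ x ∈ D, ‖a‖ < ‖x‖) :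
    volume A * volume D ≤ ENNReal.ofReal ((2 * L) ^ (Module.finrank ℝ E - 1)) *
      ∫⁻ p in Set.univ ×ˢ Set.Ioo 0 (2 * L), volume (A ∩ reflect p.1 (p.2 / 2) ⁻¹' D)
        ∂(volume.toSphere.prod volume) := by
  have hσ : Measurable fun q : E × (sphere (0 : E) 1 × ℝ) => reflect q.2.1 (q.2.2 / 2) q.1 := by
    simp only [reflect_apply]
    fun_prop
  have hDσ : Measurable (Function.uncurry fun y (p : sphere (0 : E) 1 × ℝ) =>
      D.indicator (1 : E → ENNReal) (reflect p.1 (p.2 / 2) y)) :=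
    (measurable_one.indicator hD).comp hσ
  rw [← Measure.prod_restrict, Measure.restrict_univ]
  calc volume A * volume D = ∫⁻ _ in A, volume D := by rw [setLIntegral_const, mul_comm]
    _ ≤ ∫⁻ y in A, ENNReal.ofReal ((2 * L) ^ (Module.finrank ℝ E - 1)) *
          ∫⁻ p, D.indicator 1 (reflect p.1 (p.2 / 2) y)
            ∂(volume.toSphere.prod (volume.restrict (Set.Ioo 0 (2 * L)))) := by
        refine setLIntegral_mono' hA fun y hy => ?_
        rw [lintegral_prod _ hDσ.of_uncurry_left.aemeasurable]
        exact measure_le_lintegral_reflect_mem hD hDL (hAD y hy)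
    _ = ENNReal.ofReal ((2 * L) ^ (Module.finrank ℝ E - 1)) *
          ∫⁻ p, ∫⁻ y in A, D.indicator 1 (reflect p.1 (p.2 / 2) y) ∂volume
            ∂(volume.toSphere.prod (volume.restrict (Set.Ioo 0 (2 * L)))) := by
        rw [lintegral_const_mul' _ _ ENNReal.ofReal_ne_top,
          lintegral_lintegral_swap hDσ.aemeasurable]
    _ = _ := by
        congr! 3 with p
        have hσD : MeasurableSet (reflect p.1 (p.2 / 2) ⁻¹' D) :=
          (reflect _ _).continuous.measurable hD
        rw [Set.inter_comm, ← Measure.restrict_apply hσD, ← lintegral_indicator_one hσD]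
        rfl

lemma exists_reflect_mul_le (hL : 0 < L) : ∃ K > 0, ∀ A D : Set E, MeasurableSet A →
    MeasurableSet D → A ⊆ ball 0 L → D ⊆ ball 0 L → (∀ a ∈ A, ∀ x ∈ D, ‖a‖ < ‖x‖) →
    ∃ (n : sphere (0 : E) 1) (c : ℝ), 0 ≤ c ∧
      volume.real A * volume.real D ≤ K * volume.real (A ∩ reflect n c ⁻¹' D) := by
  set μ : Measure (sphere (0 : E) 1 × ℝ) := volume.toSphere.prod volume
  set S : Set (sphere (0 : E) 1 × ℝ) := Set.univ ×ˢ Set.Ioo 0 (2 * L)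
  have hS : μ S = (volume : Measure E).toSphere Set.univ * ENNReal.ofReal (2 * L) := by
    rw [Measure.prod_prod, Real.volume_Ioo, sub_zero]
  have hS0 : μ S ≠ 0 := by
    rw [hS]
    exact mul_ne_zero (Measure.measure_univ_ne_zero.2 (Measure.toSphere_ne_zero _)) (by simpa)
  have hStop : μ S ≠ ⊤ := hS ▸ ENNReal.mul_ne_top (measure_ne_top _ _) ENNReal.ofReal_ne_top
  refine ⟨(2 * L) ^ (Module.finrank ℝ E - 1) * μ.real S, mul_pos (by positivity)
    (ENNReal.toReal_pos hS0 hStop), fun A D hA hD hAL hDL hAD => ?_⟩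
  have hlt_top {s : Set E} (hs : s ⊆ ball 0 L) : volume s ≠ ⊤ :=
    ne_top_of_le_ne_top measure_ball_lt_top.ne (measure_mono hs)
  have hint : ∫⁻ p in S, volume (A ∩ reflect p.1 (p.2 / 2) ⁻¹' D) ∂μ ≠ ⊤ := by
    refine ne_top_of_le_ne_top (ENNReal.mul_ne_top (hlt_top hAL) hStop) ?_
    rw [← setLIntegral_const]
    exact lintegral_mono fun p => measure_mono Set.inter_subset_left
  obtain ⟨⟨n, s⟩, ⟨-, hs⟩, hle⟩ := exists_setLAverage_le (μ := μ) hS0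
    (MeasurableSet.univ.prod measurableSet_Ioo).nullMeasurableSet hint
  refine ⟨n, s / 2, (half_pos hs.1).le, ?_⟩
  rw [setLAverage_eq, ENNReal.div_le_iff hS0 hStop] at hle
  have hbound : volume A * volume D ≤ ENNReal.ofReal ((2 * L) ^ (Module.finrank ℝ E - 1)) *
      (volume (A ∩ reflect n (s / 2) ⁻¹' D) * μ S) :=
    (measure_mul_measure_le_lintegral hA hD hDL hAD).trans (by gcongr)
  have hreal := ENNReal.toReal_mono (by
    have := hlt_top (Set.inter_subset_left.trans hAL : A ∩ reflect n (s / 2) ⁻¹' D ⊆ _)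
    finiteness) hbound
  rw [ENNReal.toReal_mul, ENNReal.toReal_mul, ENNReal.toReal_mul,
    ENNReal.toReal_ofReal (by positivity), mul_comm (volume (A ∩ _)).toReal, ← mul_assoc] at hreal
  exact hreal

lemma exists_mem_symmetrizationClass_measureReal_support_sdiff_ball_lt (ρ : ℝ) (hL : 0 < L)
    (hRL : R ≤ L) (hF : IsProfile L M F)
    (hR : volume.real (Function.support F) ≤ volume.real (ball (0 : E) R)) {ε : ℝ} (hε : 0 < ε) :
    ∃ G ∈ symmetrizationClass ρ L M F,
      volume.real (Function.support G \ ball (0 : E) R) < ε := by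
  obtain ⟨K, hK, htransfer⟩ := exists_reflect_mul_le (E := E) hL
  refine exists_lt_of_forall_exists_add_mul_sq_le (κ := K⁻¹)
    ⟨F, hF, le_rfl, rfl, le_rfl⟩ (fun _ => measureReal_nonneg) (by positivity) hε fun G hG => ?_
  have hm := measurableSet_support hG.1.measurable
  have hsupp := hG.1.support_subset
  obtain ⟨n, c, hc, hle⟩ := htransfer (ball 0 R \ Function.support G)
    (Function.support G \ ball 0 R) (measurableSet_ball.diff hm) (hm.diff measurableSet_ball)
    (Set.sdiff_subset.trans (ball_subset_ball hRL)) (Set.sdiff_subset.trans hsupp)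
    fun a ha x hx => (mem_ball_zero_iff.1 ha.1).trans_le (not_lt.1 (mem_ball_zero_iff.not.1 hx.2))
  refine ⟨polarize n c G, polarize_mem_symmetrizationClass hG n hc, ?_⟩
  have hdecrease := measureReal_support_polarize_sdiff_ball_add_le hG.1 n hc (R := R)
  have hout := measureReal_sdiff_le_measureReal_sdiff hm measurableSet_ball (hG.2.1.trans hR)
    (ne_top_of_le_ne_top measure_ball_lt_top.ne (measure_mono hsupp)) measure_ball_lt_top.ne
  have hgain : K⁻¹ * volume.real (Function.support G \ ball 0 R) ^ 2 ≤
      volume.real (transferSet R G n c) := by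
    rw [inv_mul_le_iff₀ hK, sq]
    exact (mul_le_mul_of_nonneg_right hout measureReal_nonneg).trans hle
  linarith

end Averaging

/-! ### The torsion function of a ball -/

section Torsion

open Metric

variable {E : Type*} [NormedAddCommGroup E]

/-- A multiple of the torsion function of `ball 0 S`, the continuum analogue of the expected exit
time. -/
def torsion (S : ℝ) (x : E) : ℝ := (S ^ 2 - ‖x‖ ^ 2)⁺

lemma torsion_of_norm_le {S : ℝ} {x : E} (hx : ‖x‖ ≤ S) : torsion S x = S ^ 2 - ‖x‖ ^ 2 :=
  posPart_of_nonneg (sub_nonneg.2 (by gcongr))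

variable [MeasurableSpace E]

lemma isProfile_torsion [BorelSpace E] {S : ℝ} (hS : 0 ≤ S) :
    IsProfile S (S ^ 2) (torsion (E := E) S) where
  measurable := (measurable_const.sub (measurable_norm.pow_const 2)).sup_const 0
  nonneg _ := posPart_nonneg _
  le _ := max_le (sub_le_self _ (sq_nonneg _)) (sq_nonneg S)
  eq_zero _ hx := posPart_of_nonpos (sub_nonpos.2 (pow_le_pow_left₀ hS hx 2))

end Torsion

section TorsionEnergy

open Metric

variable {E : Type*} [NormedAddCommGroup E] [InnerProductSpace ℝ E] [FiniteDimensional ℝ E]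
  [MeasurableSpace E] [BorelSpace E] {ρ S R L M : ℝ} {F G : E → ℝ}

lemma measureReal_ball_zero [Nontrivial E] (hρ : 0 ≤ ρ) :
    volume.real (ball (0 : E) ρ) = ρ ^ Module.finrank ℝ E * volume.real (ball (0 : E) 1) := by
  rw [measureReal_def, Measure.addHaar_ball _ _ hρ, ENNReal.toReal_mul,
    ENNReal.toReal_ofReal (by positivity), measureReal_def]

variable (E) in
/-- The second moment of Lebesgue measure on `ball 0 ρ`. -/
def ballMoment (ρ : ℝ) : ℝ := ∫ h in ball (0 : E) ρ, ‖h‖ ^ 2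

lemma ballMoment_eq [Nontrivial E] (hρ : 0 ≤ ρ) : ballMoment E ρ =
    Module.finrank ℝ E / (Module.finrank ℝ E + 2) * (ρ ^ 2 * volume.real (ball (0 : E) ρ)) := by
  obtain ⟨m, hm⟩ := Nat.exists_eq_succ_of_ne_zero (Module.finrank_pos (R := ℝ) (M := E)).ne'
  have hind : ∀ x : E, (ball (0 : E) ρ).indicator (fun h => ‖h‖ ^ 2) x =
      (Set.Iio ρ).indicator (fun r => r ^ 2) ‖x‖ := fun x => by
    simp [Set.indicator_apply]
  have hpow (r : ℝ) : r ^ m * (Set.Iio ρ).indicator (fun r => r ^ 2) r =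
      (Set.Iio ρ).indicator (fun r => r ^ (m + 2)) r := by
    simp only [Set.indicator_apply]; split_ifs <;> ring
  have hrad : ∫ r in Set.Ioi (0 : ℝ), (Set.Iio ρ).indicator (fun r => r ^ (m + 2)) r =
      ρ ^ (m + 3) / (m + 3) := by
    rw [setIntegral_indicator measurableSet_Iio, Set.Ioi_inter_Iio, ← integral_Ioc_eq_integral_Ioo,
      ← intervalIntegral.integral_of_le hρ, integral_pow]
    simp; ring
  rw [ballMoment, ← integral_indicator measurableSet_ball, integral_congr_ae (.of_forall hind),
    integral_fun_norm_addHaar, measureReal_ball_zero hρ, hm]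
  simp only [Nat.succ_eq_add_one, Nat.add_sub_cancel, smul_eq_mul, hpow, hrad, nsmul_eq_mul]
  push_cast
  field_simp
  ring

lemma ballMoment_nonneg (ρ : ℝ) : 0 ≤ ballMoment E ρ := integral_nonneg fun _ => by positivity

lemma integrableOn_ball_of_continuous {g : E → ℝ} (hg : Continuous g) (x : E) (ρ : ℝ) :
    IntegrableOn g (ball x ρ) :=
  have : ProperSpace E := FiniteDimensional.proper ℝ E
  (hg.continuousOn.integrableOn_compact (isCompact_closedBall x ρ)).mono_set ball_subset_closedBall

lemma integral_torsion [Nontrivial E] (hS : 0 ≤ S) : ∫ x, torsion (E := E) S x =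
    2 / (Module.finrank ℝ E + 2) * (S ^ 2 * volume.real (ball (0 : E) S)) := by
  have hsupp : ∀ x ∉ ball (0 : E) S, torsion S x = 0 := fun x hx =>
    (isProfile_torsion hS).eq_zero x (not_lt.1 (mem_ball_zero_iff.not.1 hx))
  rw [← setIntegral_eq_integral_of_forall_compl_eq_zero hsupp,
    setIntegral_congr_fun measurableSet_ball fun x hx =>
      torsion_of_norm_le (mem_ball_zero_iff.1 hx).le,
    integral_sub (integrableOn_ball_of_continuous continuous_const _ _)
      (integrableOn_ball_of_continuous (by fun_prop) _ _), setIntegral_const, ← ballMoment,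
    ballMoment_eq hS, smul_eq_mul]
  field_simp
  ring

lemma setIntegral_ball_eq_setIntegral_ball_zero (g : E → ℝ) (x : E) (ρ : ℝ) :
    ∫ y in ball x ρ, g y = ∫ h in ball (0 : E) ρ, g (x + h) := by
  rw [← integral_indicator measurableSet_ball, ← integral_indicator measurableSet_ball,
    ← integral_add_left_eq_self _ x]
  simp [Set.indicator_apply]

lemma setIntegral_ball_zero_inner (x : E) (ρ : ℝ) : ∫ h in ball (0 : E) ρ, inner ℝ x h = 0 := by
  rw [← integral_indicator measurableSet_ball]
  refine self_eq_neg.1 ?_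
  rw [← integral_neg, ← integral_neg_eq_self]
  refine integral_congr_ae (.of_forall fun h => ?_)
  simp only [Set.indicator_apply, mem_ball_zero_iff, norm_neg, inner_neg_right]
  split_ifs <;> simp

lemma setIntegral_ball_norm_sq_sub_norm_sq (x : E) (ρ : ℝ) :
    ∫ y in ball x ρ, (‖y‖ ^ 2 - ‖x‖ ^ 2) = ballMoment E ρ := by
  have hexp (h : E) : ‖x + h‖ ^ 2 - ‖x‖ ^ 2 = 2 * inner ℝ x h + ‖h‖ ^ 2 := by
    rw [norm_add_sq_real]; ring
  rw [setIntegral_ball_eq_setIntegral_ball_zero]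
  simp only [hexp]
  rw [integral_add (integrableOn_ball_of_continuous (by fun_prop) _ _)
      (integrableOn_ball_of_continuous (by fun_prop) _ _), integral_const_mul,
    setIntegral_ball_zero_inner, mul_zero, zero_add, ballMoment]

lemma nonlocalLaplacian_torsion_le {x : E} (hx : ‖x‖ ≤ S) (ρ : ℝ) :
    nonlocalLaplacian ρ (torsion S) x ≤ ballMoment E ρ := by
  rw [← setIntegral_ball_norm_sq_sub_norm_sq x ρ]
  have hcont : Continuous (torsion (E := E) S) := by unfold torsion; fun_prop
  refine setIntegral_mono (integrableOn_ball_of_continuous (by fun_prop) _ _)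
    (integrableOn_ball_of_continuous (by fun_prop) _ _) fun y => ?_
  have := le_posPart (S ^ 2 - ‖y‖ ^ 2)
  change torsion S x - (S ^ 2 - ‖y‖ ^ 2)⁺ ≤ _
  rw [torsion_of_norm_le hx]
  linarith

lemma nonlocalLaplacian_torsion_eq {x : E} (hρ : 0 ≤ ρ) (hx : ‖x‖ + ρ ≤ S) :
    nonlocalLaplacian ρ (torsion S) x = ballMoment E ρ := by
  rw [← setIntegral_ball_norm_sq_sub_norm_sq x ρ]
  refine setIntegral_congr_fun measurableSet_ball fun y hy => ?_
  have hy' : ‖y‖ ≤ S := by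
    have := norm_le_norm_add_norm_sub' y x
    rw [mem_ball_iff_norm] at hy
    linarith
  change torsion S x - torsion S y = _
  rw [torsion_of_norm_le hy', torsion_of_norm_le (by linarith)]
  ring

lemma IsProfile.neg_le_nonlocalLaplacian (hG : IsProfile L M G) (ρ : ℝ) (x : E) :
    -(M * volume.real (ball (0 : E) ρ)) ≤ nonlocalLaplacian ρ G x := by
  have hbound : ‖nonlocalLaplacian ρ G x‖ ≤ M * volume.real (ball x ρ) :=
    norm_setIntegral_le_of_norm_le_const measure_ball_lt_top fun y _ =>
      abs_sub_le_of_nonneg_of_le (hG.nonneg x) (hG.le x) (hG.nonneg y) (hG.le y)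
  rw [Measure.addHaar_real_ball_center] at hbound
  exact (abs_le.1 hbound).1

lemma energyForm_torsion_le (hS : 0 ≤ S) (ρ : ℝ) :
    energyForm (E := E) ρ (torsion S) (torsion S) ≤
      2 * (ballMoment E ρ * ∫ x, torsion (E := E) S x) := by
  have hW := isProfile_torsion (E := E) hS
  rw [energyForm_eq_two_mul_integral hW hW, ← integral_const_mul (ballMoment E ρ)]
  gcongr 2 * ?_
  refine integral_mono (integrable_mul_nonlocalLaplacian hW hW ρ) (hW.integrable.const_mul _)
    fun x => ?_
  change torsion S x * nonlocalLaplacian ρ (torsion S) x ≤ ballMoment E ρ * torsion S x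
  obtain hx | hx := le_total ‖x‖ S
  · rw [mul_comm]
    exact mul_le_mul_of_nonneg_right (nonlocalLaplacian_torsion_le hx ρ) (hW.nonneg x)
  · simp [hW.eq_zero x hx]

lemma mul_integral_sub_le_energyForm_torsion (hρ : 0 ≤ ρ) (hR : 0 ≤ R) (hG : IsProfile L M G) :
    2 * (ballMoment E ρ * (∫ x, G x) - M * (ballMoment E ρ +
      (R + ρ) ^ 2 * volume.real (ball (0 : E) ρ)) * volume.real (Function.support G \ ball 0 R)) ≤
      energyForm ρ G (torsion (R + ρ)) := by
  set C := ballMoment E ρ + (R + ρ) ^ 2 * volume.real (ball (0 : E) ρ)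
  have hC : 0 ≤ C := add_nonneg (ballMoment_nonneg ρ) (by positivity)
  have hW := isProfile_torsion (E := E) (add_nonneg hR hρ)
  set D := Function.support G \ ball (0 : E) R
  have hD : MeasurableSet D := (measurableSet_support hG.measurable).diff measurableSet_ball
  have hDint : Integrable (D.indicator fun _ => (1 : ℝ)) :=
    integrable_indicator_one hD (Set.sdiff_subset.trans hG.support_subset)
  have hDvol : ∫ x, D.indicator (fun _ => (1 : ℝ)) x = volume.real D := by
    simpa using integral_indicator_const (μ := volume) (1 : ℝ) hD
  rw [energyForm_eq_two_mul_integral hG hW, ← hDvol, ← integral_const_mul, ← integral_const_mul,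
    ← integral_sub (hG.integrable.const_mul _) (hDint.const_mul _)]
  gcongr 2 * ?_
  refine integral_mono ((hG.integrable.const_mul _).sub (hDint.const_mul _))
    (integrable_mul_nonlocalLaplacian hG hW ρ) fun x => ?_
  change _ ≤ G x * nonlocalLaplacian ρ (torsion (R + ρ)) x
  by_cases hx : x ∈ D
  · have hWx := hW.neg_le_nonlocalLaplacian ρ x
    have hle : G x * (ballMoment E ρ - nonlocalLaplacian ρ (torsion (R + ρ)) x) ≤ M * C :=
      (mul_le_mul_of_nonneg_left (by linarith) (hG.nonneg x)).trans
        (mul_le_mul_of_nonneg_right (hG.le x) hC)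
    simp only [Set.indicator_of_mem hx]
    linarith
  · simp only [Set.indicator_of_notMem hx, mul_zero, sub_zero]
    obtain h0 | hR : G x = 0 ∨ ‖x‖ < R := by simpa [D, or_iff_not_imp_left] using hx
    · simp [h0]
    · rw [nonlocalLaplacian_torsion_eq hρ (by linarith), mul_comm]

lemma mul_integral_le_energyForm [Nontrivial E] (hρ : 0 ≤ ρ) (hR : 0 ≤ R) (hL : 0 < L)
    (hRL : R ≤ L) (hF : IsProfile L M F)
    (hsupp : volume.real (Function.support F) ≤ volume.real (ball (0 : E) R)) {c : ℝ} (hc : 0 ≤ c) :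
    4 * c * (ballMoment E ρ * ∫ x, F x) - 2 * c ^ 2 * (ballMoment E ρ *
      ∫ x, torsion (E := E) (R + ρ) x) ≤ energyForm ρ F F := by
  set C := ballMoment E ρ + (R + ρ) ^ 2 * volume.real (ball (0 : E) ρ)
  have hM : 0 ≤ M := (hF.nonneg 0).trans (hF.le 0)
  have hC : 0 ≤ C := add_nonneg (ballMoment_nonneg ρ) (by positivity)
  have hS := add_nonneg hR hρ
  have hbound : ∀ ε > 0, 4 * c * (ballMoment E ρ * ∫ x, F x) - 2 * c ^ 2 * (ballMoment E ρ *
      ∫ x, torsion (E := E) (R + ρ) x) ≤ energyForm ρ F F + 4 * c * (M * C) * ε := fun ε hε => by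
    obtain ⟨G, ⟨hG, -, hGF, hEG⟩, hout⟩ :=
      exists_mem_symmetrizationClass_measureReal_support_sdiff_ball_lt ρ hL hRL hF hsupp hε
    have hexpand := two_mul_energyForm_le hG (isProfile_torsion (E := E) hS) ρ c
    have htorsion := mul_le_mul_of_nonneg_left (energyForm_torsion_le (E := E) hS ρ) (sq_nonneg c)
    have hcross := mul_le_mul_of_nonneg_left (mul_integral_sub_le_energyForm_torsion hρ hR hG) hc
    have hout' := mul_le_mul_of_nonneg_left hout.le (mul_nonneg hc (mul_nonneg hM hC))
    rw [hGF] at hcross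
    linarith
  have hlim : Tendsto (fun ε => energyForm ρ F F + 4 * c * (M * C) * ε) (nhdsWithin 0 (Set.Ioi 0))
      (nhds (energyForm ρ F F)) :=
    tendsto_nhdsWithin_of_tendsto_nhds (Continuous.tendsto' (by fun_prop) _ _ (by simp))
  exact ge_of_tendsto hlim (eventually_mem_nhdsWithin.mono hbound)

lemma mul_sq_integral_le_integral_torsion_mul_energyForm [Nontrivial E] (hρ : 0 < ρ) (hR : 0 ≤ R)
    (hL : 0 < L) (hRL : R ≤ L) (hF : IsProfile L M F)
    (hsupp : volume.real (Function.support F) ≤ volume.real (ball (0 : E) R)) :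
    2 * ballMoment E ρ * (∫ x, F x) ^ 2 ≤
      (∫ x, torsion (E := E) (R + ρ) x) * energyForm ρ F F := by
  have hS : 0 < R + ρ := add_pos_of_nonneg_of_pos hR hρ
  set τ := ∫ x, torsion (E := E) (R + ρ) x with hτ
  have hτ0 : 0 < τ := by
    have : 0 < volume.real (ball (0 : E) (R + ρ)) :=
      ENNReal.toReal_pos (measure_ball_pos _ _ hS).ne' measure_ball_lt_top.ne
    rw [hτ, integral_torsion hS.le]
    positivity
  have hle := mul_integral_le_energyForm hρ.le hR hL hRL hF hsupp
    (div_nonneg (integral_nonneg (μ := volume) hF.nonneg) hτ0.le)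
  calc 2 * ballMoment E ρ * (∫ x, F x) ^ 2
      = τ * (4 * ((∫ x, F x) / τ) * (ballMoment E ρ * ∫ x, F x) -
          2 * ((∫ x, F x) / τ) ^ 2 * (ballMoment E ρ * τ)) := by field_simp; ring
    _ ≤ τ * energyForm ρ F F := by gcongr

end TorsionEnergy

/-! ### The nonlocal energy as an average of translation energies -/

section TranslationEnergy

open Metric

variable {E : Type*} [NormedAddCommGroup E] [InnerProductSpace ℝ E] [FiniteDimensional ℝ E]
  [MeasurableSpace E] [BorelSpace E] {L M ρ : ℝ} {F : E → ℝ}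

/-- The squared `L²` distance between `F` and its translate by `y`, the continuum analogue of
`shiftEnergy`. -/
def translationEnergy (F : E → ℝ) (y : E) : ℝ := ∫ x, (F (x + y) - F x) ^ 2

lemma translationEnergy_nonneg (F : E → ℝ) (y : E) : 0 ≤ translationEnergy F y :=
  integral_nonneg fun _ => sq_nonneg _

lemma IsProfile.integrable_sq_sub (hF : IsProfile L M F) (a b : E) :
    Integrable fun x => (F (x + a) - F (x + b)) ^ 2 := by
  have : ProperSpace E := FiniteDimensional.proper ℝ E
  refine integrable_of_bounded_of_eq_zero (C := M ^ 2) (K := L + ‖a‖ + ‖b‖)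
    (((hF.measurable.comp (measurable_add_const a)).sub
      (hF.measurable.comp (measurable_add_const b))).pow_const 2) (fun x => ?_) fun x hx => ?_
  · rw [abs_pow]
    have := abs_sub_le_of_nonneg_of_le (hF.nonneg (x + a)) (hF.le _) (hF.nonneg (x + b)) (hF.le _)
    gcongr
  · have ha := norm_le_add_norm_add x a
    have hb := norm_le_add_norm_add x b
    rw [hF.eq_zero _ (by linarith [norm_nonneg b]), hF.eq_zero _ (by linarith [norm_nonneg a])]
    ring

lemma integral_sq_sub_eq_translationEnergy (F : E → ℝ) (a b : E) :
    ∫ x, (F (x + a) - F (x + b)) ^ 2 = translationEnergy F (a - b) := by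
  rw [translationEnergy, ← integral_add_right_eq_self (fun x => (F (x + (a - b)) - F x) ^ 2) b]
  simp [add_assoc]

lemma translationEnergy_add_add_translationEnergy_sub_le (hF : IsProfile L M F) (a b : E) :
    translationEnergy F (a + b) + translationEnergy F (a - b) ≤
      2 * translationEnergy F a + 2 * translationEnergy F b := by
  have hint (u v : E) : Integrable fun x => (F (x + u) - F (x + v)) ^ 2 := hF.integrable_sq_sub u v
  have hpair (u v u' v' : E) : Integrable fun x =>
      (F (x + u) - F (x + v)) ^ 2 + (F (x + u') - F (x + v')) ^ 2 := (hint _ _).add (hint _ _)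
  have hmono : ∫ x, ((F (x + (a + b)) - F (x + 0)) ^ 2 + (F (x + a) - F (x + b)) ^ 2) ≤
      ∫ x, (((F (x + a) - F (x + 0)) ^ 2 + (F (x + (a + b)) - F (x + b)) ^ 2) +
        ((F (x + b) - F (x + 0)) ^ 2 + (F (x + (a + b)) - F (x + a)) ^ 2)) :=
    integral_mono ((hint _ _).add (hint _ _)) ((hpair _ _ _ _).add (hpair _ _ _ _)) fun x => by
      linarith [sq_nonneg (F (x + 0) - F (x + a) + F (x + (a + b)) - F (x + b))]
  rw [integral_add (hint _ _) (hint _ _), integral_add (hpair _ _ _ _) (hpair _ _ _ _),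
    integral_add (hint _ _) (hint _ _), integral_add (hint _ _) (hint _ _)] at hmono
  simp only [integral_sq_sub_eq_translationEnergy, sub_zero, add_sub_cancel_left,
    add_sub_cancel_right] at hmono
  linarith

lemma measurable_translationEnergy (hF : Measurable F) : Measurable (translationEnergy F) := by
  have hmeas : StronglyMeasurable (Function.uncurry fun y x => (F (x + y) - F x) ^ 2) :=
    (((hF.comp (measurable_snd.add measurable_fst)).sub
      (hF.comp measurable_snd)).pow_const 2).stronglyMeasurable
  exact hmeas.integral_prod_right.measurable

lemma IsProfile.translationEnergy_le (hF : IsProfile L M F) (y : E) :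
    translationEnergy F y ≤ 2 * M * ∫ x, F x := by
  have hshift : Integrable fun x => F (x + y) := hF.integrable.comp_add_right y
  calc translationEnergy F y ≤ ∫ x, M * (F (x + y) + F x) := by
        have hint := hF.integrable_sq_sub y 0
        simp only [add_zero] at hint
        refine integral_mono hint ((hshift.add hF.integrable).const_mul M) fun x => ?_
        have habs :=
          abs_sub_le_of_nonneg_of_le (hF.nonneg (x + y)) (hF.le _) (hF.nonneg x) (hF.le _)
        have hle : |F (x + y) - F x| ≤ F (x + y) + F x :=
          abs_le.2 ⟨by linarith [hF.nonneg (x + y)], by linarith [hF.nonneg x]⟩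
        change (F (x + y) - F x) ^ 2 ≤ M * (F (x + y) + F x)
        rw [← sq_abs, sq]
        gcongr
        exact (abs_nonneg _).trans habs
    _ = 2 * M * ∫ x, F x := by
        rw [integral_const_mul, integral_add hshift hF.integrable, integral_add_right_eq_self]
        ring

lemma energyForm_eq_setIntegral_translationEnergy (hF : IsProfile L M F) (ρ : ℝ) :
    energyForm ρ F F = ∫ h in ball (0 : E) ρ, translationEnergy F h := by
  have hshear := measurePreserving_prod_add (volume : Measure E) (volume : Measure E)
  have hpull (z : E × E) : energyDensity ρ F F (z.1, z.1 + z.2) =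
      (ball (0 : E) ρ).indicator (fun h => (F (z.1 + h) - F z.1) ^ 2) z.2 := by
    simp only [energyDensity, dist_self_add_right, Set.indicator_apply, mem_ball_zero_iff]
    split_ifs <;> ring
  have hint : Integrable (fun z : E × E => (ball (0 : E) ρ).indicator
      (fun h => (F (z.1 + h) - F z.1) ^ 2) z.2) (volume.prod volume) :=
    (hshear.integrable_comp_of_integrable (hF.integrable_energyDensity hF ρ)).congr
      (.of_forall hpull)
  calc energyForm ρ F F = ∫ z : E × E, energyDensity ρ F F (z.1, z.1 + z.2) :=
        (hshear.integral_comp' (f := MeasurableEquiv.shearAddRight E) _).symm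
    _ = ∫ h, (ball (0 : E) ρ).indicator (translationEnergy F) h := by
      simp only [hpull]
      rw [Measure.volume_eq_prod, integral_prod_symm _ hint]
      refine integral_congr_ae (.of_forall fun h => ?_)
      by_cases hh : h ∈ ball (0 : E) ρ <;> simp [hh, translationEnergy]
    _ = _ := integral_indicator measurableSet_ball

lemma IsProfile.integrableOn_translationEnergy_comp (hF : IsProfile L M F) {T : E → E}
    (hT : Measurable T) (ρ : ℝ) :
    IntegrableOn (fun h => translationEnergy F (T h)) (ball (0 : E) ρ) :=
  Measure.integrableOn_of_bounded (M := 2 * M * ∫ x, F x) measure_ball_lt_top.ne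
    ((measurable_translationEnergy hF.measurable).comp hT).aestronglyMeasurable
    (.of_forall fun _ => (abs_of_nonneg (translationEnergy_nonneg F _)).trans_le
      (hF.translationEnergy_le _))

lemma setIntegral_ball_zero_comp_isometryEquiv (e : E ≃ₗᵢ[ℝ] E) (g : E → ℝ) (ρ : ℝ) :
    ∫ h in ball (0 : E) ρ, g (e h) = ∫ h in ball (0 : E) ρ, g h := by
  have := e.measurePreserving.setIntegral_preimage_emb e.toHomeomorph.measurableEmbedding g
    (ball 0 ρ)
  rwa [show e ⁻¹' ball 0 ρ = ball 0 ρ by ext; simp] at this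

variable {ι : Type*} [Fintype ι] (b : OrthonormalBasis ι ℝ E)

-- The flip `h ↦ h - 2 ⟪b i, h⟫ b i` preserves the ball, and the parallelogram inequality bounds
-- the sum of the translation energies of a vector and of its flip.
lemma setIntegral_translationEnergy_sum_insert_le (hF : IsProfile L M F) (ρ : ℝ) {s : Finset ι}
    {i : ι} (hi : i ∉ s) :
    ∫ h in ball (0 : E) ρ, translationEnergy F (∑ j ∈ insert i s, inner ℝ (b j) h • b j) ≤
      (∫ h in ball (0 : E) ρ, translationEnergy F (∑ j ∈ s, inner ℝ (b j) h • b j)) +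
        ∫ h in ball (0 : E) ρ, translationEnergy F (inner ℝ (b i) h • b i) := by
  let flip : E ≃ₗᵢ[ℝ] E := (ℝ ∙ b i)ᗮ.reflection
  have hflip (h : E) : flip h = h - (2 * inner ℝ (b i) h) • b i := by
    simp only [flip, Submodule.reflection_orthogonal_apply, Submodule.reflection_singleton_apply]
    simp [two_mul, add_smul, two_smul]
  let P (s : Finset ι) (h : E) : E := ∑ j ∈ s, inner ℝ (b j) h • b j
  have hPmeas (s : Finset ι) : Measurable (P s) := by fun_prop
  have hP (h : E) : P (insert i s) h = P s h + inner ℝ (b i) h • b i := by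
    simp only [P, Finset.sum_insert hi, add_comm]
  have hPflip (h : E) : P (insert i s) (flip h) = P s h - inner ℝ (b i) h • b i := by
    have hPs : P s (flip h) = P s h := Finset.sum_congr rfl fun j hj => by
      simp [hflip, inner_sub_right, inner_smul_right,
        b.inner_eq_zero (ne_of_mem_of_not_mem hj hi)]
    rw [hP, hPs, sub_eq_add_neg, ← neg_smul]
    simp [hflip, inner_sub_right, inner_smul_right, two_mul]
  have hint {T : E → E} (hT : Measurable T) :
      IntegrableOn (fun h => translationEnergy F (T h)) (ball 0 ρ) :=
    hF.integrableOn_translationEnergy_comp hT ρ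
  have hinti : IntegrableOn (fun h => translationEnergy F (inner ℝ (b i) h • b i)) (ball 0 ρ) :=
    hint (by fun_prop)
  have hintflip :
      IntegrableOn (fun h => translationEnergy F (P (insert i s) (flip h))) (ball 0 ρ) :=
    hint ((hPmeas (insert i s)).comp flip.continuous.measurable)
  have hpar := integral_mono ((hint (hPmeas (insert i s))).add hintflip)
    (((hint (hPmeas s)).const_mul 2).add (hinti.const_mul 2)) fun h => by
      simpa only [Pi.add_apply, hPflip, hP] using
        translationEnergy_add_add_translationEnergy_sub_le hF (P s h) (inner ℝ (b i) h • b i)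
  rw [integral_add' (hint (hPmeas _)) hintflip,
    integral_add' ((hint (hPmeas s)).const_mul 2) (hinti.const_mul 2), integral_const_mul,
    integral_const_mul, setIntegral_ball_zero_comp_isometryEquiv flip
      (fun h => translationEnergy F (P (insert i s) h)) ρ] at hpar
  linarith

lemma energyForm_le_sum_setIntegral_translationEnergy (hF : IsProfile L M F) (ρ : ℝ) :
    energyForm ρ F F ≤
      ∑ i, ∫ h in ball (0 : E) ρ, translationEnergy F (inner ℝ (b i) h • b i) := by
  have hsum (s : Finset ι) :
      ∫ h in ball (0 : E) ρ, translationEnergy F (∑ j ∈ s, inner ℝ (b j) h • b j) ≤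
        ∑ i ∈ s, ∫ h in ball (0 : E) ρ, translationEnergy F (inner ℝ (b i) h • b i) := by
    induction s using Finset.induction_on with
    | empty => simp [translationEnergy]
    | insert i s hi ih =>
      rw [Finset.sum_insert hi]
      linarith [setIntegral_translationEnergy_sum_insert_le b hF ρ hi]
  rw [energyForm_eq_setIntegral_translationEnergy hF]
  simpa only [b.sum_repr'] using hsum Finset.univ

lemma setIntegral_ball_zero_inner_sq (i : ι) (ρ : ℝ) :
    ∫ h in ball (0 : E) ρ, inner ℝ (b i) h ^ 2 = ballMoment E ρ / Module.finrank ℝ E := by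
  have hsymm (j : ι) : ∫ h in ball (0 : E) ρ, inner ℝ (b j) h ^ 2 =
      ∫ h in ball (0 : E) ρ, inner ℝ (b i) h ^ 2 := by
    rw [← setIntegral_ball_zero_comp_isometryEquiv (b.equiv b (Equiv.swap i j)) _ ρ]
    refine setIntegral_congr_fun measurableSet_ball fun h _ => ?_
    have hb : b.equiv b (Equiv.swap i j) (b i) = b j := by simp
    change inner ℝ (b j) (b.equiv b (Equiv.swap i j) h) ^ 2 = _
    rw [← hb, LinearIsometryEquiv.inner_map_map]
  have hsum : ballMoment E ρ = ∑ j, ∫ h in ball (0 : E) ρ, inner ℝ (b j) h ^ 2 := by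
    rw [← integral_finsetSum _ fun j _ => integrableOn_ball_of_continuous (by fun_prop) _ _]
    simp only [b.sum_sq_inner_right, ballMoment]
  have hcard : (Module.finrank ℝ E : ℝ) ≠ 0 := by
    rw [Module.finrank_eq_card_basis b.toBasis]
    exact_mod_cast (Fintype.card_pos_iff.2 ⟨i⟩).ne'
  rw [hsum, Finset.sum_congr rfl fun j _ => hsymm j, Finset.sum_const, Finset.card_univ,
    ← Module.finrank_eq_card_basis b.toBasis, nsmul_eq_mul, mul_div_cancel_left₀ _ hcard]

end TranslationEnergy

/-! ### Piecewise constant extensions of lattice functions -/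

section LatticeFloor

variable {d : ℕ} {f : Site d → ℝ}

local notation "𝔼" => EuclideanSpace ℝ (Fin d)

/-- The corner `m` of the half-open unit cell `m + [0, 1)^d` containing a point of `ℝ^d`; the
piecewise constant extension of a lattice function `f` is `f ∘ latticeFloor`. -/
def latticeFloor (x : EuclideanSpace ℝ (Fin d)) : Site d := fun i => ⌊x i⌋

lemma measurable_latticeFloor : Measurable (latticeFloor : 𝔼 → Site d) := by
  unfold latticeFloor
  fun_prop

lemma latticeFloor_preimage_singleton (m : Site d) :
    (latticeFloor ⁻¹' {m} : Set 𝔼) =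
      WithLp.ofLp ⁻¹' Set.univ.pi fun i => Set.Ico (m i : ℝ) (m i + 1) := by
  ext x
  simp [latticeFloor, funext_iff, Int.floor_eq_iff]

lemma measurePreserving_latticeFloor :
    MeasurePreserving (latticeFloor : 𝔼 → Site d) volume Measure.count := by
  refine ⟨measurable_latticeFloor, Measure.ext_of_singleton fun m => ?_⟩
  rw [Measure.map_apply measurable_latticeFloor (measurableSet_singleton m),
    latticeFloor_preimage_singleton, (PiLp.volume_preserving_ofLp (Fin d)).measure_preimage
      (MeasurableSet.univ_pi fun _ => measurableSet_Ico).nullMeasurableSet]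
  simp [Real.volume_pi_Ico]

lemma setIntegral_latticeFloor_preimage (m : Site d) (i : Fin d) {g : ℝ → ℝ} (hg : Measurable g) :
    ∫ x in (latticeFloor ⁻¹' {m} : Set 𝔼), g (x i) =
      ∫ s in Set.Ico (m i : ℝ) (m i + 1), g s := by
  have (j : Fin d) : IsProbabilityMeasure (volume.restrict (Set.Ico (m j : ℝ) (m j + 1))) :=
    ⟨by simp⟩
  rw [latticeFloor_preimage_singleton,
    (PiLp.volume_preserving_ofLp (Fin d)).setIntegral_preimage_emb
      (MeasurableEquiv.toLp 2 _).symm.measurableEmbedding (fun y => g (y i)), volume_pi,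
    Measure.restrict_pi_pi, integral_comp_eval hg.aestronglyMeasurable]

lemma exists_isProfile_comp_latticeFloor (hf : f.HasFiniteSupport) (hf₀ : ∀ x, 0 ≤ f x) (R : ℝ) :
    ∃ L M, 0 < L ∧ R ≤ L ∧ IsProfile L M (f ∘ latticeFloor : 𝔼 → ℝ) := by
  obtain ⟨M, hM⟩ : BddAbove (Set.range f) := by
    refine ((hf.image f).insert 0).bddAbove.mono ?_
    rintro _ ⟨x, rfl⟩
    by_cases hx : f x = 0
    · exact Or.inl hx
    · exact Or.inr ⟨x, hx, rfl⟩
  have hcell (m : Site d) : Bornology.IsBounded (latticeFloor ⁻¹' {m} : Set 𝔼) := by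
    rw [latticeFloor_preimage_singleton]
    refine (PiLp.antilipschitzWith_ofLp 2 _).isBounded_preimage
      ((Metric.isBounded_Icc (fun i => (m i : ℝ)) (fun i => m i + 1)).subset fun y hy => ?_)
    exact ⟨fun i => (hy i trivial).1, fun i => (hy i trivial).2.le⟩
  have hsupp : Bornology.IsBounded (Function.support (f ∘ latticeFloor : 𝔼 → ℝ)) := by
    refine ((Bornology.isBounded_biUnion hf).2 fun m _ => hcell m).subset fun x hx => ?_
    exact Set.mem_biUnion (x := latticeFloor x) hx rfl
  obtain ⟨K, hK⟩ := hsupp.exists_norm_le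
  refine ⟨max (max (K + 1) R) 1, M, by positivity, (le_max_right _ _).trans (le_max_left _ _),
    (measurable_of_countable f).comp measurable_latticeFloor, fun x => hf₀ _,
    fun x => hM ⟨_, rfl⟩, fun x hx => ?_⟩
  by_contra hne
  linarith [hK x hne, (le_max_left (K + 1) R).trans (le_max_left _ (1 : ℝ))]

lemma integral_comp_latticeFloor (hf : f.HasFiniteSupport) :
    ∫ x : 𝔼, f (latticeFloor x) = ∑' m, f m := by
  have hfm : Measurable f := measurable_of_countable f
  rw [← integral_map measurable_latticeFloor.aemeasurable hfm.aestronglyMeasurable,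
    measurePreserving_latticeFloor.map_eq,
    integral_countable (integrable_count_iff.2 (summable_of_hasFiniteSupport hf).norm)]
  simp [measureReal_def]

lemma measureReal_support_comp_latticeFloor (hf : f.HasFiniteSupport) :
    volume.real (Function.support (f ∘ latticeFloor : 𝔼 → ℝ)) = (Function.support f).ncard := by
  rw [Function.support_comp_eq_preimage, measureReal_def,
    measurePreserving_latticeFloor.measure_preimage
      (Set.to_countable _).measurableSet.nullMeasurableSet,
    Measure.count_apply_finite _ hf, Set.ncard_eq_toFinset_card _ hf]
  simp

lemma hasSum_setIntegral_latticeFloor_preimage {g : 𝔼 → ℝ} (hg : Integrable g) :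
    HasSum (fun m : Site d => ∫ x in latticeFloor ⁻¹' {m}, g x) (∫ x, g x) := by
  have hcells : ⋃ m : Site d, (latticeFloor ⁻¹' {m} : Set 𝔼) = Set.univ :=
    Set.eq_univ_of_forall fun x => Set.mem_iUnion.2 ⟨latticeFloor x, rfl⟩
  have := hasSum_integral_iUnion (fun m => measurable_latticeFloor (measurableSet_singleton m))
    (fun m m' hne => (Set.disjoint_singleton.2 hne).preimage latticeFloor) hg.integrableOn
  rwa [hcells, setIntegral_univ] at this

lemma setIntegral_Ico_comp_floor_add (g : ℤ → ℝ) (k : ℤ) (t : ℝ) :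
    ∫ s in Set.Ico (k : ℝ) (k + 1), g ⌊s + t⌋ =
      (1 - Int.fract t) * g (k + ⌊t⌋) + Int.fract t * g (k + ⌊t⌋ + 1) := by
  have ht := Int.floor_add_fract t
  have ht₀ := Int.fract_nonneg t
  have ht₁ := (Int.fract_lt_one t).le
  have hlow : Set.EqOn (fun _ => g (k + ⌊t⌋)) (fun s => g ⌊s⌋)
      (Set.uIoo (k + t : ℝ) (k + ⌊t⌋ + 1)) := fun s hs => by
    rw [Set.uIoo_of_le (by linarith)] at hs
    exact congrArg g (Int.floor_eq_iff.2
      ⟨by push_cast; linarith [hs.1], by push_cast; linarith [hs.2]⟩).symm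
  have hhigh : Set.EqOn (fun _ => g (k + ⌊t⌋ + 1)) (fun s => g ⌊s⌋)
      (Set.uIoo (k + ⌊t⌋ + 1 : ℝ) (k + t + 1)) := fun s hs => by
    rw [Set.uIoo_of_le (by linarith)] at hs
    exact congrArg g (Int.floor_eq_iff.2
      ⟨by push_cast; linarith [hs.1], by push_cast; linarith [hs.2]⟩).symm
  calc ∫ s in Set.Ico (k : ℝ) (k + 1), g ⌊s + t⌋
      = ∫ s in (k : ℝ)..(k + 1), g ⌊s + t⌋ := by
        rw [intervalIntegral.integral_of_le (by linarith), integral_Ico_eq_integral_Ioc]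
    _ = ∫ s in (k + t)..(k + t + 1), g ⌊s⌋ := by
        rw [intervalIntegral.integral_comp_add_right (fun s => g ⌊s⌋), add_right_comm]
    _ = (∫ s in (k + t)..(k + ⌊t⌋ + 1), g ⌊s⌋) + ∫ s in (k + ⌊t⌋ + 1)..(k + t + 1), g ⌊s⌋ :=
        (intervalIntegral.integral_add_adjacent_intervals
          (intervalIntegrable_const.congr_uIoo hlow)
          (intervalIntegrable_const.congr_uIoo hhigh)).symm
    _ = (1 - Int.fract t) * g (k + ⌊t⌋) + Int.fract t * g (k + ⌊t⌋ + 1) := by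
        rw [← intervalIntegral.integral_congr_uIoo hlow,
          ← intervalIntegral.integral_congr_uIoo hhigh, intervalIntegral.integral_const,
          intervalIntegral.integral_const, smul_eq_mul, smul_eq_mul]
        congr 2 <;> linarith

lemma latticeFloor_add_smul_basisFun (x : 𝔼) (t : ℝ) (i : Fin d) :
    latticeFloor (x + t • EuclideanSpace.basisFun (Fin d) ℝ i) =
      latticeFloor x + (⌊x i + t⌋ - latticeFloor x i) • unitVec d i := by
  funext j
  rcases eq_or_ne j i with rfl | hj
  · simp [latticeFloor, unitVec]
  · simp [latticeFloor, unitVec, hj]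

-- Within a cell, translation by `t • e_i` moves a fraction `1 - fract t` of the points by `⌊t⌋`
-- cells and the rest by `⌊t⌋ + 1` cells.
lemma translationEnergy_comp_latticeFloor {L M : ℝ} (hf : f.HasFiniteSupport)
    (hF : IsProfile L M (f ∘ latticeFloor : 𝔼 → ℝ)) (i : Fin d) (t : ℝ) :
    translationEnergy (f ∘ latticeFloor) (t • EuclideanSpace.basisFun (Fin d) ℝ i) =
      (1 - Int.fract t) * shiftEnergy f (⌊t⌋ • unitVec d i) +
        Int.fract t * shiftEnergy f ((⌊t⌋ + 1) • unitVec d i) := by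
  have hint := hF.integrable_sq_sub (t • EuclideanSpace.basisFun (Fin d) ℝ i) 0
  simp only [add_zero] at hint
  have hcell (m : Site d) : ∫ x in (latticeFloor ⁻¹' {m} : Set 𝔼),
      ((f ∘ latticeFloor) (x + t • EuclideanSpace.basisFun (Fin d) ℝ i) -
        (f ∘ latticeFloor) x) ^ 2 =
      (1 - Int.fract t) * (f (m + ⌊t⌋ • unitVec d i) - f m) ^ 2 +
        Int.fract t * (f (m + (⌊t⌋ + 1) • unitVec d i) - f m) ^ 2 := by
    let g (k : ℤ) : ℝ := (f (m + (k - m i) • unitVec d i) - f m) ^ 2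
    have hg : Measurable fun s : ℝ => g ⌊s + t⌋ :=
      (measurable_of_countable g).comp (by fun_prop)
    rw [setIntegral_congr_fun (g := fun x : 𝔼 => g ⌊x i + t⌋)
      (measurable_latticeFloor (measurableSet_singleton m)) fun x hx => ?_,
      setIntegral_latticeFloor_preimage m i hg, setIntegral_Ico_comp_floor_add]
    · simp only [g, add_assoc, add_sub_cancel_left]
    · have hx : latticeFloor x = m := hx
      simp only [g, Function.comp_apply, latticeFloor_add_smul_basisFun, hx]
  have hsum (k : ℤ) := summable_sq_sub_comp_add hf (k • unitVec d i)
  rw [translationEnergy, ← (hasSum_setIntegral_latticeFloor_preimage hint).tsum_eq]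
  simp only [hcell]
  rw [((hsum _).mul_left _).tsum_add ((hsum _).mul_left _), tsum_mul_left, tsum_mul_left]
  rfl

lemma translationEnergy_comp_latticeFloor_le {L M : ℝ} (hf : f.HasFiniteSupport)
    (hF : IsProfile L M (f ∘ latticeFloor : 𝔼 → ℝ)) (i : Fin d) (t : ℝ) :
    translationEnergy (f ∘ latticeFloor) (t • EuclideanSpace.basisFun (Fin d) ℝ i) ≤
      (t ^ 2 + 1) * shiftEnergy f (unitVec d i) := by
  have ht₁ := sub_nonneg.2 (Int.fract_lt_one t).le
  have hcoeff : (1 - Int.fract t) * (⌊t⌋ : ℝ) ^ 2 + Int.fract t * ((⌊t⌋ + 1 : ℤ) : ℝ) ^ 2 ≤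
      t ^ 2 + 1 := by
    push_cast
    rw [← Int.self_sub_fract t]
    nlinarith [sq_nonneg (Int.fract t - 1 / 2)]
  calc translationEnergy (f ∘ latticeFloor) (t • EuclideanSpace.basisFun (Fin d) ℝ i)
      = (1 - Int.fract t) * shiftEnergy f (⌊t⌋ • unitVec d i) +
          Int.fract t * shiftEnergy f ((⌊t⌋ + 1) • unitVec d i) :=
        translationEnergy_comp_latticeFloor hf hF i t
    _ ≤ (1 - Int.fract t) * ((⌊t⌋ : ℝ) ^ 2 * shiftEnergy f (unitVec d i)) +
          Int.fract t * (((⌊t⌋ + 1 : ℤ) : ℝ) ^ 2 * shiftEnergy f (unitVec d i)) := by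
        gcongr <;> exact shiftEnergy_zsmul_le hf _ _
    _ ≤ (t ^ 2 + 1) * shiftEnergy f (unitVec d i) := by
        rw [← mul_assoc, ← mul_assoc, ← add_mul]
        exact mul_le_mul_of_nonneg_right hcoeff (shiftEnergy_nonneg _ _)

lemma energyForm_comp_latticeFloor_le {L M : ℝ} (hf : f.HasFiniteSupport)
    (hF : IsProfile L M (f ∘ latticeFloor : 𝔼 → ℝ)) (ρ : ℝ) :
    energyForm ρ (f ∘ latticeFloor : 𝔼 → ℝ) (f ∘ latticeFloor) ≤
      (ballMoment 𝔼 ρ / d + volume.real (Metric.ball (0 : 𝔼) ρ)) *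
        ∑ i, shiftEnergy f (unitVec d i) := by
  let b := EuclideanSpace.basisFun (Fin d) ℝ
  refine (energyForm_le_sum_setIntegral_translationEnergy b hF ρ).trans ?_
  rw [Finset.mul_sum]
  refine Finset.sum_le_sum fun i _ => ?_
  have hsq : IntegrableOn (fun h : 𝔼 => inner ℝ (b i) h ^ 2) (Metric.ball 0 ρ) :=
    integrableOn_ball_of_continuous (by fun_prop) 0 ρ
  have hone : IntegrableOn (fun _ : 𝔼 => (1 : ℝ)) (Metric.ball 0 ρ) :=
    integrableOn_ball_of_continuous continuous_const 0 ρ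
  calc ∫ h in Metric.ball (0 : 𝔼) ρ, translationEnergy (f ∘ latticeFloor) (inner ℝ (b i) h • b i)
      ≤ ∫ h in Metric.ball (0 : 𝔼) ρ, (inner ℝ (b i) h ^ 2 + 1) * shiftEnergy f (unitVec d i) :=
        integral_mono (hF.integrableOn_translationEnergy_comp (by fun_prop) ρ)
          ((hsq.add hone).mul_const _) fun h => translationEnergy_comp_latticeFloor_le hf hF i _
    _ = (ballMoment 𝔼 ρ / d + volume.real (Metric.ball (0 : 𝔼) ρ)) *
          shiftEnergy f (unitVec d i) := by
        rw [integral_mul_const, integral_add hsq hone, setIntegral_ball_zero_inner_sq]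
        simp

/-- The factor `τ` in the discrete torsion inequality `(∑ f)² ≤ τ 𝓔(f)` for functions supported on
at most `k` sites: the integral of the torsion function of the ball of radius `ballRadius d k + ρ`,
times the loss `1 + (d + 2) / ρ²` incurred by discretization at scale `ρ`. -/
def torsionFactor (d : ℕ) (ρ k : ℝ) : ℝ :=
  2 / (d + 2) * (ballVol d * (ballRadius d k + ρ) ^ (d + 2)) * (1 + (d + 2) / ρ ^ 2)

lemma torsionFactor_nonneg (d : ℕ) {ρ k : ℝ} (hρ : 0 ≤ ρ) (hk : 0 ≤ k) :
    0 ≤ torsionFactor d ρ k := by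
  have := ballVol_pos d
  have := ballRadius_nonneg d hk
  unfold torsionFactor
  positivity

lemma measureReal_ball_eq_ballVol_mul_pow (hd : 1 ≤ d) {r : ℝ} (hr : 0 ≤ r) :
    volume.real (Metric.ball (0 : 𝔼) r) = ballVol d * r ^ d := by
  have : Nonempty (Fin d) := ⟨⟨0, hd⟩⟩
  rw [measureReal_ball_zero hr, finrank_euclideanSpace, Fintype.card_fin, mul_comm]
  rfl

lemma sq_tsum_le_torsionFactor_mul_dirichletEnergy (hd : 1 ≤ d) (hf : f.HasFiniteSupport)
    (hf₀ : ∀ x, 0 ≤ f x) {k ρ : ℝ} (hk : (Function.support f).ncard ≤ k) (hρ : 0 < ρ) :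
    (∑' x, f x) ^ 2 ≤ torsionFactor d ρ k * dirichletEnergy f := by
  have : Nonempty (Fin d) := ⟨⟨0, hd⟩⟩
  have hk₀ : 0 ≤ k := (Nat.cast_nonneg _).trans hk
  have hR := ballRadius_nonneg d hk₀
  have hω := ballVol_pos d
  obtain ⟨L, M, hL, hRL, hF⟩ := exists_isProfile_comp_latticeFloor hf hf₀ (ballRadius d k)
  have hsupp : volume.real (Function.support (f ∘ latticeFloor : 𝔼 → ℝ)) ≤
      volume.real (Metric.ball (0 : 𝔼) (ballRadius d k)) := by
    rwa [measureReal_support_comp_latticeFloor hf, measureReal_ball_eq_ballVol_mul_pow hd hR,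
      ballVol_mul_ballRadius_pow hd hk₀]
  have hlower := mul_sq_integral_le_integral_torsion_mul_energyForm hρ hR hL hRL hF hsupp
  have hupper := energyForm_comp_latticeFloor_le hf hF ρ
  have hmoment : ballMoment 𝔼 ρ = d / (d + 2) * (ρ ^ 2 * (ballVol d * ρ ^ d)) := by
    simp only [ballMoment_eq hρ.le, finrank_euclideanSpace, Fintype.card_fin,
      measureReal_ball_eq_ballVol_mul_pow hd hρ.le]
  have htorsion : ∫ x : 𝔼, torsion (ballRadius d k + ρ) x =
      2 / (d + 2) * (ballVol d * (ballRadius d k + ρ) ^ (d + 2)) := by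
    rw [integral_torsion (by positivity), measureReal_ball_eq_ballVol_mul_pow hd (by positivity),
      finrank_euclideanSpace, Fintype.card_fin]
    ring
  simp only [Function.comp_apply, integral_comp_latticeFloor hf] at hlower
  rw [htorsion] at hlower
  rw [measureReal_ball_eq_ballVol_mul_pow hd hρ.le] at hupper
  have hmoment_pos : 0 < 2 * ballMoment 𝔼 ρ := by rw [hmoment]; positivity
  refine le_of_mul_le_mul_left (hlower.trans
    ((mul_le_mul_of_nonneg_left hupper (by positivity)).trans_eq ?_)) hmoment_pos
  rw [hmoment, torsionFactor, dirichletEnergy]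
  field_simp

end LatticeFloor

/-! ### Summation over level sets -/

-- With `e` listed in decreasing order as `a₁ ≥ a₂ ≥ …` and `mₖ` the mean of the first `k` values,
-- `mₖ - mₖ₊₁ = (a₁ + ⋯ + aₖ - k aₖ₊₁) / (k (k + 1)) ≤ τ k / (k (k + 1))`.
lemma le_average_add_sum_of_sum_sub_le {α : Type*} {e : α → ℝ} (he : ∀ x, 0 ≤ e x) {τ : ℕ → ℝ}
    (hτ : ∀ (s : Finset α) (t : ℝ), s.Nonempty → 0 ≤ t → (∀ x ∈ s, t ≤ e x) → (∀ x ∉ s, e x ≤ t) →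
      ∑ x ∈ s, (e x - t) ≤ τ s.card)
    (s : Finset α) (hs : ∀ x ∈ s, ∀ y ∉ s, e y ≤ e x) {x : α} (hx : x ∈ s) :
    e x ≤ (∑ y ∈ s, e y) / s.card + ∑ j ∈ Finset.Ico 1 s.card, τ j / (j * (j + 1)) := by
  induction s using Finset.induction_on_min_value e generalizing x with
  | empty => simp at hx
  | insert a s ha hmin ih =>
    rcases s.eq_empty_or_nonempty with rfl | ⟨y, hy⟩
    · simp_all
    have hs' : ∀ z ∉ s, e z ≤ e a := fun z hz => by
      by_cases hza : z = a
      · rw [hza]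
      · exact hs a (Finset.mem_insert_self a s) z (by simp [hza, hz])
    have hcard : (0 : ℝ) < s.card := by exact_mod_cast Finset.card_pos.2 ⟨y, hy⟩
    have hgap : ∑ y ∈ s, e y - s.card * e a ≤ τ s.card := by
      simpa using hτ s (e a) ⟨y, hy⟩ (he a) hmin hs'
    have hmean : (∑ y ∈ s, e y) / s.card =
        (∑ y ∈ insert a s, e y) / (s.card + 1) +
          (∑ y ∈ s, e y - s.card * e a) / (s.card * (s.card + 1)) := by
      rw [Finset.sum_insert ha]
      field_simp
      ring
    have hgap' : (∑ y ∈ s, e y - s.card * e a) / (s.card * (s.card + 1)) ≤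
        τ s.card / (s.card * (s.card + 1)) := by gcongr
    have htop {z : α} (hz : z ∈ s) : e z ≤ (∑ y ∈ s, e y) / s.card +
        ∑ j ∈ Finset.Ico 1 s.card, τ j / (j * (j + 1)) :=
      ih (fun u hu v hv => (hs' v hv).trans (hmin u hu)) hz
    have hxy : ∃ z ∈ s, e x ≤ e z := by
      rcases Finset.mem_insert.1 hx with rfl | hx
      · exact ⟨y, hy, hmin y hy⟩
      · exact ⟨x, hx, le_rfl⟩
    obtain ⟨z, hz, hxz⟩ := hxy
    rw [Finset.card_insert_of_notMem ha, Finset.sum_Ico_succ_top (Finset.card_pos.2 ⟨y, hy⟩)]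
    push_cast
    linarith [htop hz]

section LevelSets

variable {d : ℕ} {A : Set (Site d)} {e : Site d → ℝ}

lemma IsExitFun.tsum_posPart_sub_le (hd : 1 ≤ d) (hA : A.Finite) (he : IsExitFun d A e) {t : ℝ}
    (ht : 0 ≤ t) {k ρ : ℝ} (hk : (Function.support fun x => (e x - t)⁺).ncard ≤ k) (hρ : 0 < ρ) :
    ∑' x, (e x - t)⁺ ≤ torsionFactor d ρ k := by
  have hfin : (fun x => (e x - t)⁺).HasFiniteSupport :=
    hA.subset fun x hx => by_contra fun hxA => hx (he.posPart_sub_eq_zero ht hxA)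
  have hτ := torsionFactor_nonneg d hρ.le ((Nat.cast_nonneg _).trans hk)
  rcases (tsum_nonneg fun x => posPart_nonneg (e x - t)).eq_or_lt with hsum | hsum
  · rwa [← hsum]
  refine le_of_mul_le_mul_right ?_ hsum
  calc (∑' x, (e x - t)⁺) * ∑' x, (e x - t)⁺ = (∑' x, (e x - t)⁺) ^ 2 := (sq _).symm
    _ ≤ torsionFactor d ρ k * dirichletEnergy fun x => (e x - t)⁺ :=
        sq_tsum_le_torsionFactor_mul_dirichletEnergy hd hfin (fun _ => posPart_nonneg _) hk hρ
    _ ≤ torsionFactor d ρ k * ∑' x, (e x - t)⁺ :=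
        mul_le_mul_of_nonneg_left (he.dirichletEnergy_posPart_sub_le hd hA ht) hτ

lemma IsExitFun.sum_sub_le (hd : 1 ≤ d) (hA : A.Finite) (he : IsExitFun d A e) {t ρ : ℝ}
    (ht : 0 ≤ t) (hρ : 0 < ρ) {s : Finset (Site d)} (hs : ∀ x ∈ s, t ≤ e x)
    (hs' : ∀ x ∉ s, e x ≤ t) : ∑ x ∈ s, (e x - t) ≤ torsionFactor d ρ s.card := by
  have hzero {x : Site d} (hx : x ∉ s) : (e x - t)⁺ = 0 :=
    posPart_eq_zero.2 (sub_nonpos.2 (hs' x hx))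
  have hsupp : (Function.support fun x => (e x - t)⁺).ncard ≤ s.card := by
    rw [← Set.ncard_coe_finset]
    exact Set.ncard_le_ncard (fun x hx => by_contra fun hxs => hx (hzero hxs)) s.finite_toSet
  calc ∑ x ∈ s, (e x - t) = ∑' x, (e x - t)⁺ := by
        rw [tsum_eq_sum fun x hx => hzero hx]
        exact Finset.sum_congr rfl fun x hx => (posPart_eq_self.2 (sub_nonneg.2 (hs x hx))).symm
    _ ≤ torsionFactor d ρ s.card :=
        he.tsum_posPart_sub_le hd hA ht (by exact_mod_cast hsupp) hρ

lemma IsExitFun.le_torsionFactor_sum (hd : 1 ≤ d) (hA : A.Finite) (he : IsExitFun d A e)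
    {ρ : ℕ → ℝ} (hρ : ∀ k, 1 ≤ k → 0 < ρ k) {x : Site d} (hx : x ∈ A) :
    e x ≤ torsionFactor d (ρ A.ncard) A.ncard / A.ncard +
      ∑ j ∈ Finset.Ico 1 A.ncard, torsionFactor d (ρ j) j / (j * (j + 1)) := by
  have hnonneg := he.nonneg hd hA
  have houtside : ∀ y ∉ hA.toFinset, e y = 0 := fun y hy => he.1 y (by simpa using hy)
  have hlevel := le_average_add_sum_of_sum_sub_le hnonneg (τ := fun k => torsionFactor d (ρ k) k)
    (fun s t hne ht hs hs' => he.sum_sub_le hd hA ht (hρ _ hne.card_pos) hs hs') hA.toFinset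
    (fun y _ z hz => (houtside z hz).trans_le (hnonneg y)) (hA.mem_toFinset.2 hx)
  have hcard := Finset.card_pos.2 ⟨x, hA.mem_toFinset.2 hx⟩
  have htotal := he.sum_sub_le hd hA le_rfl (hρ _ hcard) (fun y _ => hnonneg y)
    fun y hy => (houtside y hy).le
  simp only [sub_zero, ← Set.ncard_eq_toFinset_card A hA] at hlevel htotal
  exact hlevel.trans (by gcongr)

end LevelSets

/-! ### Asymptotics of the torsion bound -/

lemma one_add_mul_pow_le {c u : ℝ} (hc : 0 ≤ c) (hu₀ : 0 ≤ u) (hu₁ : u ≤ 1) (N : ℕ) :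
    (1 + c * u) ^ N ≤ 1 + ((1 + c) ^ N - 1) * u := by
  have hconv := (convexOn_pow (𝕜 := ℝ) N).2 (x := 1) (y := 1 + c) (by simp)
    (by simp only [Set.mem_Ici]; positivity) (sub_nonneg.2 hu₁) hu₀ (sub_add_cancel 1 u)
  have hbase : (1 - u) * 1 + u * (1 + c) = 1 + c * u := by ring
  simp only [smul_eq_mul, hbase, one_pow] at hconv
  linarith

lemma mul_rpow_sub_one_le_rpow_sub_rpow {β x : ℝ} (hβ₀ : 0 ≤ β) (hβ₁ : β ≤ 1) (hx : 1 ≤ x) :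
    β * x ^ (β - 1) ≤ x ^ β - (x - 1) ^ β := by
  have hx₀ : 0 < x := one_pos.trans_le hx
  have hinv : x⁻¹ ≤ 1 := inv_le_one_of_one_le₀ hx
  have hbern : (1 + -x⁻¹) ^ β ≤ 1 + β * -x⁻¹ :=
    rpow_one_add_le_one_add_mul_self (by linarith) hβ₀ hβ₁
  have hsplit : (x - 1) ^ β = x ^ β * (1 + -x⁻¹) ^ β := by
    rw [← Real.mul_rpow hx₀.le (by linarith), mul_add, mul_neg, mul_inv_cancel₀ hx₀.ne', mul_one,
      sub_eq_add_neg]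
  have hle := mul_le_mul_of_nonneg_left hbern (Real.rpow_nonneg hx₀.le β)
  rw [Real.rpow_sub_one hx₀.ne', hsplit, div_eq_mul_inv]
  linarith

lemma sum_rpow_sub_one_le {β : ℝ} (hβ₀ : 0 < β) (hβ₁ : β ≤ 1) (n : ℕ) :
    ∑ j ∈ Finset.Ico 1 (n + 1), (j : ℝ) ^ (β - 1) ≤ (n : ℝ) ^ β / β := by
  induction n with
  | zero => simp [hβ₀.ne']
  | succ n ih =>
    have hstep := mul_rpow_sub_one_le_rpow_sub_rpow hβ₀.le hβ₁ (x := ((n + 1 : ℕ) : ℝ)) (by simp)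
    rw [le_div_iff₀ hβ₀] at ih ⊢
    rw [Finset.sum_Ico_succ_top (by lia)]
    push_cast at hstep ⊢
    rw [add_sub_cancel_right] at hstep
    linarith

lemma rpow_add_sum_rpow_div_le {β : ℝ} (hβ₀ : 0 < β) (hβ₁ : β ≤ 1) (n : ℕ) :
    (n : ℝ) ^ β + ∑ j ∈ Finset.Ico 1 n, (j : ℝ) ^ β / (j + 1) ≤ (1 + 1 / β) * (n : ℝ) ^ β := by
  have hsum : ∑ j ∈ Finset.Ico 1 n, (j : ℝ) ^ β / (j + 1) ≤ (n : ℝ) ^ β / β :=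
    calc ∑ j ∈ Finset.Ico 1 n, (j : ℝ) ^ β / (j + 1)
        ≤ ∑ j ∈ Finset.Ico 1 n, (j : ℝ) ^ (β - 1) := by
          refine Finset.sum_le_sum fun j hj => ?_
          have hj₀ : (0 : ℝ) < j := Nat.cast_pos.2 (Finset.mem_Ico.1 hj).1
          rw [Real.rpow_sub_one hj₀.ne']
          gcongr
          linarith
      _ ≤ ∑ j ∈ Finset.Ico 1 (n + 1), (j : ℝ) ^ (β - 1) :=
          Finset.sum_le_sum_of_subset_of_nonneg (Finset.Ico_subset_Ico_right n.le_succ)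
            fun j _ _ => Real.rpow_nonneg j.cast_nonneg _
      _ ≤ (n : ℝ) ^ β / β := sum_rpow_sub_one_le hβ₀ hβ₁ n
  calc (n : ℝ) ^ β + ∑ j ∈ Finset.Ico 1 n, (j : ℝ) ^ β / (j + 1)
      ≤ (n : ℝ) ^ β + (n : ℝ) ^ β / β := by gcongr
    _ = (1 + 1 / β) * (n : ℝ) ^ β := by ring

lemma ballRadius_one_pos (d : ℕ) : 0 < ballRadius d 1 :=
  Real.rpow_pos_of_pos (div_pos one_pos (ballVol_pos d)) _

lemma ballRadius_pow {d : ℕ} (hd : 1 ≤ d) {t : ℝ} (ht : 0 ≤ t) :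
    ballRadius d (t ^ d) = ballRadius d 1 * t := by
  rw [ballRadius, ballRadius, ← mul_one_div, mul_comm, one_div (d : ℝ),
    Real.mul_rpow (by have := ballVol_pos d; positivity) (pow_nonneg ht d),
    Real.pow_rpow_inv_natCast ht (by lia)]

lemma sq_ballRadius {d : ℕ} (hd : 1 ≤ d) {v : ℝ} (hv : 0 ≤ v) :
    ballRadius d v ^ 2 = ballRadius d 1 ^ 2 * v ^ (2 / (d : ℝ)) := by
  have hpow : (v ^ (1 / (d : ℝ))) ^ d = v := by
    rw [one_div, Real.rpow_inv_natCast_pow hv (by lia)]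
  have hsq : (v ^ (1 / (d : ℝ))) ^ 2 = v ^ (2 / (d : ℝ)) := by
    rw [← Real.rpow_natCast, ← Real.rpow_mul hv]
    ring_nf
  conv_lhs => rw [← hpow]
  rw [ballRadius_pow hd (Real.rpow_nonneg hv _), mul_pow, hsq]

lemma torsionFactor_pow {d : ℕ} (hd : 1 ≤ d) {s : ℝ} (hs : 0 < s) :
    torsionFactor d s (s ^ (3 * d)) = 2 * ballRadius d 1 ^ 2 / (d + 2) * s ^ (3 * d) *
      (s ^ 6 * ((1 + (ballRadius d 1)⁻¹ * (s ^ 2)⁻¹) ^ (d + 2) * (1 + (d + 2) * (s ^ 2)⁻¹))) := by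
  have hr := ballRadius_one_pos d
  have hvol : ballVol d * ballRadius d 1 ^ d = 1 := ballVol_mul_ballRadius_pow hd zero_le_one
  have hsum : ballRadius d (s ^ (3 * d)) + s =
      ballRadius d 1 * s ^ 3 * (1 + (ballRadius d 1)⁻¹ * (s ^ 2)⁻¹) := by
    rw [pow_mul, ballRadius_pow hd (by positivity)]
    field_simp
  have hpow : ballVol d * (ballRadius d 1 * s ^ 3) ^ (d + 2) =
      ballRadius d 1 ^ 2 * s ^ (3 * d) * s ^ 6 := by
    calc ballVol d * (ballRadius d 1 * s ^ 3) ^ (d + 2)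
        = ballVol d * ballRadius d 1 ^ d * ballRadius d 1 ^ 2 * s ^ (3 * d) * s ^ 6 := by ring
      _ = ballRadius d 1 ^ 2 * s ^ (3 * d) * s ^ 6 := by rw [hvol, one_mul]
  rw [torsionFactor, hsum, mul_pow, ← mul_assoc (ballVol d), hpow]
  ring

lemma exists_torsionFactor_pow_le {d : ℕ} (hd : 1 ≤ d) :
    ∃ K, 0 ≤ K ∧ ∀ s : ℝ, 1 ≤ s → torsionFactor d s (s ^ (3 * d)) ≤
      2 * ballRadius d 1 ^ 2 / (d + 2) * s ^ (3 * d) * (s ^ 6 + K * s ^ 4) := by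
  have hr := ballRadius_one_pos d
  set L := (1 + (ballRadius d 1)⁻¹) ^ (d + 2) - 1
  have hL₀ : 0 ≤ L := sub_nonneg.2 (one_le_pow₀ (by simpa using hr.le))
  refine ⟨L + (d + 2) + L * (d + 2), by positivity, fun s hs => ?_⟩
  have hs₀ : 0 < s := one_pos.trans_le hs
  set u := (s ^ 2)⁻¹ with hu
  have hu₀ : 0 ≤ u := by positivity
  have hu₁ : u ≤ 1 := inv_le_one_of_one_le₀ (one_le_pow₀ hs)
  rw [torsionFactor_pow hd hs₀]
  gcongr
  calc s ^ 6 * ((1 + (ballRadius d 1)⁻¹ * u) ^ (d + 2) * (1 + (d + 2) * u))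
      ≤ s ^ 6 * ((1 + L * u) * (1 + (d + 2) * u)) := by
        gcongr
        exact one_add_mul_pow_le (inv_nonneg.2 hr.le) hu₀ hu₁ _
    _ = s ^ 6 * (1 + L * u + (d + 2) * u + L * (d + 2) * u * u) := by ring
    _ ≤ s ^ 6 * (1 + L * u + (d + 2) * u + L * (d + 2) * u * 1) := by gcongr
    _ = s ^ 6 + (L + (d + 2) + L * (d + 2)) * s ^ 4 := by
        rw [hu]
        field_simp
        ring

lemma exists_torsionFactor_rpow_le {d : ℕ} (hd : 1 ≤ d) :
    ∃ K, 0 ≤ K ∧ ∀ k : ℝ, 1 ≤ k → torsionFactor d (k ^ (1 / (3 * d : ℝ))) k ≤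
      2 * ballRadius d 1 ^ 2 / (d + 2) * k * (k ^ (2 / d : ℝ) + K * k ^ (4 / (3 * d) : ℝ)) := by
  obtain ⟨K, hK, hbound⟩ := exists_torsionFactor_pow_le hd
  refine ⟨K, hK, fun k hk => ?_⟩
  have hd₀ : (d : ℝ) ≠ 0 := by positivity
  have hs := hbound (k ^ (1 / (3 * d : ℝ))) (Real.one_le_rpow hk (by positivity))
  have hpow (m : ℕ) : (k ^ (1 / (3 * d : ℝ))) ^ m = k ^ (m / (3 * d : ℝ)) := by
    rw [← Real.rpow_natCast, ← Real.rpow_mul (by positivity), one_div_mul_eq_div]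
  have hself : ((3 * d : ℕ) : ℝ) / (3 * d) = 1 := by
    push_cast
    exact div_self (by positivity)
  have hsix : ((6 : ℕ) : ℝ) / (3 * d) = 2 / d := by
    field_simp
    norm_num
  rwa [hpow, hpow, hpow, hself, Real.rpow_one, hsix] at hs

lemma div_add_sum_div_le {a K β γ : ℝ} (ha : 0 ≤ a) (hK : 0 ≤ K) (hβ₀ : 0 < β) (hβ₁ : β ≤ 1)
    (hγ₀ : 0 < γ) (hγ₁ : γ ≤ 1) {τ : ℕ → ℝ}
    (hτ : ∀ j : ℕ, 1 ≤ j → τ j ≤ a * j * ((j : ℝ) ^ β + K * (j : ℝ) ^ γ)) {n : ℕ} (hn : 1 ≤ n) :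
    τ n / n + ∑ j ∈ Finset.Ico 1 n, τ j / (j * (j + 1)) ≤
      a * (1 + 1 / β) * (n : ℝ) ^ β + a * K * (1 + 1 / γ) * (n : ℝ) ^ γ := by
  have hdiv (j : ℕ) (hj : 1 ≤ j) : τ j / j ≤ a * ((j : ℝ) ^ β + K * (j : ℝ) ^ γ) := by
    rw [div_le_iff₀ (by exact_mod_cast hj), mul_right_comm]
    exact hτ j hj
  calc τ n / n + ∑ j ∈ Finset.Ico 1 n, τ j / (j * (j + 1))
      ≤ a * ((n : ℝ) ^ β + K * (n : ℝ) ^ γ) +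
          ∑ j ∈ Finset.Ico 1 n, a * ((j : ℝ) ^ β + K * (j : ℝ) ^ γ) / (j + 1) := by
        refine add_le_add (hdiv n hn) (Finset.sum_le_sum fun j hj => ?_)
        rw [← div_div]
        gcongr
        exact hdiv j (Finset.mem_Ico.1 hj).1
    _ = a * ((n : ℝ) ^ β + ∑ j ∈ Finset.Ico 1 n, (j : ℝ) ^ β / (j + 1)) +
          a * K * ((n : ℝ) ^ γ + ∑ j ∈ Finset.Ico 1 n, (j : ℝ) ^ γ / (j + 1)) := by
        simp only [mul_add, Finset.mul_sum, add_div, Finset.sum_add_distrib, mul_div_assoc,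
          mul_assoc]
        ring
    _ ≤ a * ((1 + 1 / β) * (n : ℝ) ^ β) + a * K * ((1 + 1 / γ) * (n : ℝ) ^ γ) := by
        gcongr
        · exact rpow_add_sum_rpow_div_le hβ₀ hβ₁ n
        · exact rpow_add_sum_rpow_div_le hγ₀ hγ₁ n
    _ = a * (1 + 1 / β) * (n : ℝ) ^ β + a * K * (1 + 1 / γ) * (n : ℝ) ^ γ := by ring

theorem exists_exitFun_le_sq_ballRadius_add {d : ℕ} (hd : 2 ≤ d) :
    ∃ C, 0 ≤ C ∧ ∀ A : Set (Site d), A.Finite → ∀ x, exitFun d A x ≤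
      ballRadius d A.ncard ^ 2 + C * (A.ncard : ℝ) ^ (4 / (3 * d) : ℝ) := by
  have hd₁ : 1 ≤ d := by lia
  have hd₂ : (2 : ℝ) ≤ d := by exact_mod_cast hd
  obtain ⟨K, hK, hτ⟩ := exists_torsionFactor_rpow_le hd₁
  set a := 2 * ballRadius d 1 ^ 2 / ((d : ℝ) + 2) with ha
  have hlead : a * (1 + 1 / (2 / d)) = ballRadius d 1 ^ 2 := by
    rw [ha]
    field_simp
    ring
  refine ⟨a * K * (1 + 1 / (4 / (3 * d))), by positivity, fun A hA x => ?_⟩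
  have he := isExitFun_exitFun hd₁ hA
  by_cases hx : x ∈ A
  · have hn : 1 ≤ A.ncard := (Set.ncard_pos hA).2 ⟨x, hx⟩
    have hρ (k : ℕ) (hk : 1 ≤ k) : 0 < (k : ℝ) ^ (1 / (3 * d : ℝ)) :=
      Real.rpow_pos_of_pos (by exact_mod_cast hk) _
    rw [sq_ballRadius hd₁ A.ncard.cast_nonneg, ← hlead]
    exact (he.le_torsionFactor_sum hd₁ hA hρ hx).trans <|
      div_add_sum_div_le (by positivity) hK (by positivity)
        (div_le_one_of_le₀ hd₂ (by positivity)) (by positivity)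
        (div_le_one_of_le₀ (by linarith) (by positivity)) (fun j hj => hτ j (by exact_mod_cast hj))
        hn
  · rw [he.1 x hx]
    positivity

/-! ### The one-dimensional case -/

lemma exists_Ioo_subset_of_finite {S : Set ℤ} (hS : S.Finite) {x : ℤ} (hx : x ∈ S) :
    ∃ a b, a ∉ S ∧ b ∉ S ∧ x ∈ Set.Ioo a b ∧ Set.Ioo a b ⊆ S := by
  obtain ⟨l, hl⟩ := hS.bddBelow
  obtain ⟨u, hu⟩ := hS.bddAbove
  obtain ⟨a, ⟨hax, haS⟩, ha⟩ := Int.exists_greatest_of_bdd (P := fun z => z < x ∧ z ∉ S)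
    ⟨x, fun z hz => hz.1.le⟩
    ⟨l - 1, by linarith [hl hx], fun h => by linarith [hl h]⟩
  obtain ⟨b, ⟨hxb, hbS⟩, hb⟩ := Int.exists_least_of_bdd (P := fun z => x < z ∧ z ∉ S)
    ⟨x, fun z hz => hz.1.le⟩
    ⟨u + 1, by linarith [hu hx], fun h => by linarith [hu h]⟩
  refine ⟨a, b, haS, hbS, ⟨hax, hxb⟩, fun z hz => by_contra fun hzS => ?_⟩
  rcases lt_trichotomy z x with hzx | rfl | hxz
  · exact (ha z ⟨hzx, hzS⟩).not_gt hz.1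
  · exact hzS hx
  · exact (hb z ⟨hxz, hzS⟩).not_gt hz.2

lemma Adj.eq_add_one_or_eq_sub_one {y z : Site 1} (h : Adj y z) :
    y 0 = z 0 + 1 ∨ y 0 = z 0 - 1 := by
  have hsq : (y 0 - z 0) ^ 2 = 1 := by
    have hnsq : nsq (y - z) = 1 := h
    simp only [nsq, Finset.univ_unique, Finset.sum_singleton] at hnsq
    exact_mod_cast hnsq
  rcases eq_or_eq_neg_of_sq_eq_sq _ _ (hsq.trans (one_pow 2).symm) with h | h <;> lia

lemma IsExitFun.le_mul_of_Ioo_subset {A : Set (Site 1)} (hA : A.Finite) {e : Site 1 → ℝ}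
    (he : IsExitFun 1 A e) {a b : ℤ} (hab : ∀ y : Site 1, y 0 ∈ Set.Ioo a b → y ∈ A)
    (ha : ∀ y : Site 1, y 0 = a → y ∉ A) (hb : ∀ y : Site 1, y 0 = b → y ∉ A) {x : Site 1}
    (hx : x 0 ∈ Set.Ioo a b) : e x ≤ (x 0 - a) * (b - x 0) := by
  refine he.le_of_laplacian_le le_rfl (B := {y | y 0 ∈ Set.Ioo a b}) (hA.subset hab) hab
    (g := fun y => (y 0 - a) * (b - y 0)) (fun y _ => ?_) (fun y hy => ?_) hx
  · have hunit : unitVec 1 default 0 = 1 := rfl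
    simp only [laplacian_apply, Finset.univ_unique, Finset.sum_singleton, Pi.add_apply,
      Pi.sub_apply, hunit]
    push_cast
    linarith
  · obtain ⟨hy, z, ⟨haz, hzb⟩, hyz⟩ := hy
    have hend : y 0 = a ∨ y 0 = b := by
      rcases hyz.eq_add_one_or_eq_sub_one with h | h
      · right
        by_contra hne
        exact hy ⟨by lia, by lia⟩
      · left
        by_contra hne
        exact hy ⟨by lia, by lia⟩
    rcases hend with h | h
    · simp [he.1 y (ha y h), h]
    · simp [he.1 y (hb y h), h]

theorem exitFun_one_le {A : Set (Site 1)} (hA : A.Finite) (x : Site 1) :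
    exitFun 1 A x ≤ ((A.ncard + 1) / 2) ^ 2 := by
  have he := isExitFun_exitFun le_rfl hA
  by_cases hx : x ∈ A
  · have hinj : Function.Injective fun y : Site 1 => y 0 := (Equiv.funUnique (Fin 1) ℤ).injective
    have hmem (y : Site 1) : y ∈ A ↔ y 0 ∈ (fun y : Site 1 => y 0) '' A :=
      hinj.mem_set_image.symm
    obtain ⟨a, b, ha, hb, hxab, hab⟩ := exists_Ioo_subset_of_finite (hA.image _) ((hmem x).1 hx)
    have hle := he.le_mul_of_Ioo_subset hA (fun y hy => (hmem y).2 (hab hy))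
      (fun y hy => by rwa [hmem, hy]) (fun y hy => by rwa [hmem, hy]) hxab
    have hcard : b - a ≤ A.ncard + 1 := by
      have hncard := Set.ncard_le_ncard hab (hA.image _)
      rw [Set.ncard_image_of_injective A hinj, ← Finset.coe_Ioo, Set.ncard_coe_finset,
        Int.card_Ioo] at hncard
      lia
    have hcard' : (b - a : ℝ) ≤ A.ncard + 1 := by exact_mod_cast hcard
    have hlt : (a : ℝ) < b := by exact_mod_cast hxab.1.trans hxab.2
    calc exitFun 1 A x ≤ (x 0 - a) * (b - x 0) := hle
      _ ≤ ((b - a) / 2) ^ 2 := by linarith [sq_nonneg ((x 0 - a : ℝ) - (b - x 0))]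
      _ ≤ ((A.ncard + 1) / 2) ^ 2 := by gcongr
  · rw [he.1 x hx]
    positivity

lemma ballVol_one : ballVol 1 = 2 := by
  norm_num [ballVol, InnerProductSpace.volume_ball_of_dim_odd (k := 0)
    (finrank_euclideanSpace_fin (𝕜 := ℝ) (n := 1))]

lemma ballRadius_dim_one {v : ℝ} (hv : 0 ≤ v) : ballRadius 1 v = v / 2 := by
  have hvol := ballVol_mul_ballRadius_pow le_rfl hv
  rw [ballVol_one, pow_one] at hvol
  linarith

/-! ### The isoperimetric inequality -/

/-- The exponent of the error term in the isoperimetric inequality. For `d ≥ 2` its value comes from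
smoothing a function supported on `k` sites at the scale `ρ = k ^ (1 / (3 d))`. -/
def errorExponent (d : ℕ) : ℝ := if d = 1 then 1 else 4 / (3 * d)

lemma gam_le_two_div {d : ℕ} (hd : 2 ≤ d) : gam d ≤ 2 / (3 * d : ℝ) := by
  rcases hd.eq_or_lt with rfl | hd
  · norm_num [gam]
  have hlog : 1 / 2 ≤ Real.log 3 := by
    have hmono : Real.log 2 ≤ Real.log 3 := Real.log_le_log two_pos (by norm_num)
    linarith [Real.log_two_gt_d9]
  have hpow : (2 : ℝ) ^ (-(d : ℝ)) ≤ 1 :=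
    Real.rpow_le_one_of_one_le_of_nonpos one_le_two (by simp)
  have hd₃ : (3 : ℝ) ≤ d := by exact_mod_cast hd
  rw [gam, if_neg (by lia), if_neg (by lia)]
  calc (2 : ℝ) ^ (-(d : ℝ)) / (2 * (d : ℝ) ^ 2 * Real.log 3) ≤ 1 / (2 * (d : ℝ) ^ 2 * (1 / 2)) := by
        gcongr
    _ ≤ 2 / (3 * d : ℝ) := by
        rw [div_le_div_iff₀ (by positivity) (by positivity)]
        nlinarith

lemma errorExponent_le {d : ℕ} (hd : 1 ≤ d) : errorExponent d ≤ 2 / d - gam d := by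
  rcases hd.eq_or_lt with rfl | hd
  · norm_num [errorExponent, gam]
  · have hsplit : (2 : ℝ) / d - 2 / (3 * d) = 4 / (3 * d) := by
      field_simp
      norm_num
    rw [errorExponent, if_neg (by lia)]
    linarith [gam_le_two_div hd]

lemma rpow_errorExponent_le {d : ℕ} (hd : 1 ≤ d) {n : ℕ} (hn : 2 ≤ n) :
    (n : ℝ) ^ errorExponent d ≤ 4 * ((n : ℝ) ^ ((2 : ℝ) / d - gam d) * Real.log n ^ 2) := by
  have hlog : 1 / 2 ≤ Real.log n := by
    have hmono : Real.log 2 ≤ Real.log n := Real.log_le_log two_pos (by exact_mod_cast hn)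
    linarith [Real.log_two_gt_d9]
  have hn₁ : (1 : ℝ) ≤ n := by exact_mod_cast one_le_two.trans hn
  calc (n : ℝ) ^ errorExponent d ≤ (n : ℝ) ^ ((2 : ℝ) / d - gam d) := by
        gcongr
        exact errorExponent_le hd
    _ = 4 * ((n : ℝ) ^ ((2 : ℝ) / d - gam d) * (1 / 2) ^ 2) := by ring
    _ ≤ 4 * ((n : ℝ) ^ ((2 : ℝ) / d - gam d) * Real.log n ^ 2) := by gcongr

lemma exists_exitFun_le_sq_ballRadius_add_errorExponent {d : ℕ} (hd : 1 ≤ d) :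
    ∃ C, 0 ≤ C ∧ ∀ A : Set (Site d), A.Finite → A.Nonempty → ∀ x, exitFun d A x ≤
      ballRadius d A.ncard ^ 2 + C * (A.ncard : ℝ) ^ errorExponent d := by
  rcases hd.eq_or_lt with rfl | hd
  · refine ⟨1, zero_le_one, fun A hA hne x => (exitFun_one_le hA x).trans ?_⟩
    have hcard : (1 : ℝ) ≤ A.ncard := by exact_mod_cast (Set.ncard_pos hA).2 hne
    rw [ballRadius_dim_one A.ncard.cast_nonneg, errorExponent, if_pos rfl, Real.rpow_one]
    linarith
  · obtain ⟨C, hC, hbound⟩ := exists_exitFun_le_sq_ballRadius_add hd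
    refine ⟨C, hC, fun A hA _ x => ?_⟩
    rw [errorExponent, if_neg (by lia)]
    exact hbound A hA x

theorem isoperimetric_theorem_general (d : ℕ) (hd : 1 ≤ d) :
    ∃ C, 0 ≤ C ∧ ∀ n : ℕ, 1 ≤ n → ∀ A : Set (Site d), A.Finite → A.ncard = n →
      ebar d A ≤ exitFun d (lball d n) 0 + C * (n : ℝ) ^ errorExponent d := by
  obtain ⟨C, hC, hbound⟩ := exists_exitFun_le_sq_ballRadius_add_errorExponent hd
  refine ⟨C, hC, fun n hn A hA hcard => csSup_le (Set.range_nonempty _) ?_⟩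
  rintro _ ⟨x, rfl⟩
  have hne : A.Nonempty := (Set.ncard_pos hA).1 (by lia)
  calc exitFun d A x ≤ ballRadius d n ^ 2 + C * (n : ℝ) ^ errorExponent d := by
        simpa only [hcard] using hbound A hA hne x
    _ ≤ exitFun d (lball d n) 0 + C * (n : ℝ) ^ errorExponent d := by
        gcongr
        exact sq_ballRadius_le_exitFun_lball hd n

theorem isoperimetric_theorem (d : ℕ) (hd : 1 ≤ d) :
    ∃ C : ℝ, ∀ n : ℕ, 2 ≤ n → ∀ A : Set (Site d), A.Finite → A.ncard = n →
      ebar d A ≤ exitFun d (lball d n) 0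
        + C * (n : ℝ) ^ ((2 : ℝ) / (d : ℝ) - gam d) * Real.log n ^ 2 := by
  obtain ⟨C, hC, hbound⟩ := isoperimetric_theorem_general d hd
  refine ⟨C * 4, fun n hn A hA hcard => (hbound n (by lia) A hA hcard).trans ?_⟩
  simpa only [mul_assoc, add_le_add_iff_left] using
    mul_le_mul_of_nonneg_left (rpow_errorExponent_le hd hn) hC

end RotorRouterPaper
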